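/- arXiv:2211.09417 — 10 statements merged into one kernel-verified Lean document; each statement's English description precedes it below -/
import Mathlib

section
/- Let C be a central word. Then there exist palindromes U and V such that 0·C·1 = U·V and 1·C·0 = V·U; in particular, the words 0·C·1 and 1·C·0 are conjugates. -/
/-- The lower Christoffel word `w_{a,b}`: the binary word of length `a+b` whose
`k`-th letter (1-based) is `⌊kb/(a+b)⌋ - ⌊(k-1)b/(a+b)⌋` (with `false = 0`, `true = 1`). -/
def lowerChristoffel (a b : ℕ) : List Bool :=
  (List.range (a + b)).map fun i => decide ((i + 1) * b / (a + b) ≠ i * b / (a + b))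

/-- The upper Christoffel word `W_{a,b}`: the binary word of length `a+b` whose
`k`-th letter is `⌈kb/(a+b)⌉ - ⌈(k-1)b/(a+b)⌉`. -/
def upperChristoffel (a b : ℕ) : List Bool :=
  (List.range (a + b)).map fun i =>
    decide (((i + 1) * b + (a + b) - 1) / (a + b) ≠ (i * b + (a + b) - 1) / (a + b))

/-- `p` is a period of `w`: `p` is positive and `w_i = w_{i+p}` for all valid indices. -/
def HasPeriod (w : List Bool) (p : ℕ) : Prop :=
  0 < p ∧ ∀ i, i + p < w.length → w.getD i false = w.getD (i + p) false

/-- A central word: a binary word with two coprime periods `p`, `q` and length `p + q - 2`. -/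
def IsCentral (w : List Bool) : Prop :=
  ∃ p q : ℕ, Nat.Coprime p q ∧ HasPeriod w p ∧ HasPeriod w q ∧ w.length + 2 = p + q

/-- A binary word is balanced if any two factors of the same length have numbers of `1`s
differing by at most `1`. -/
def BalancedWord (w : List Bool) : Prop :=
  ∀ u v : List Bool, u <:+: w → v <:+: w → u.length = v.length →
    |(u.count true : ℤ) - (v.count true : ℤ)| ≤ 1

/-- `w^m`: the `m`-th power of the word `w`. -/
def wpow (w : List Bool) (m : ℕ) : List Bool := (List.replicate m w).flatten

/-- A word is primitive if it is not a proper power. -/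
def IsPrimitiveWord (w : List Bool) : Prop := ¬ ∃ (v : List Bool) (m : ℕ), 2 ≤ m ∧ w = wpow v m

/-- A Lyndon word: a nonempty primitive word lexicographically strictly smaller than all
of its proper nonempty suffixes (for the order `0 < 1`, i.e. `false < true`). -/
def IsLyndonWord (w : List Bool) : Prop :=
  w ≠ [] ∧ IsPrimitiveWord w ∧
    ∀ u v : List Bool, w = u ++ v → u ≠ [] → v ≠ [] → List.Lex (· < ·) w v

/-- `p` is the minimal period of `w`. -/
def IsMinPeriod (w : List Bool) (p : ℕ) : Prop :=
  HasPeriod w p ∧ ∀ q : ℕ, HasPeriod w q → p ≤ q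

/-- `u` is a factor of the infinite periodic word `w^ω`. -/
def IsOmegaFactor (u w : List Bool) : Prop := ∃ m : ℕ, u <:+: wpow w m

/-- A primitive Christoffel word: a lower or upper Christoffel word `w_{a,b}` with
`gcd(a,b) = 1`. -/
def IsPrimitiveChristoffel (c : List Bool) : Prop :=
  ∃ a b : ℕ, Nat.Coprime a b ∧ (c = lowerChristoffel a b ∨ c = upperChristoffel a b)

/-- Multiplication by `p` is injective modulo `n`. -/
lemma aux_inj {n p : ℕ} (h : Nat.Coprime n p) {i j : ℕ} (hi : i < n) (hj : j < n)
    (e : (i * p) % n = (j * p) % n) : i = j := by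
  have h1 : i * p ≡ j * p [MOD n] := e
  have h2 : i ≡ j [MOD n] := Nat.ModEq.cancel_right_of_coprime h h1
  have h3 : i % n = j % n := h2
  rwa [Nat.mod_eq_of_lt hi, Nat.mod_eq_of_lt hj] at h3

lemma aux_surj {n p : ℕ} (h : Nat.Coprime n p) {i : ℕ} (hi : i < n) :
    ∃ j < n, (j * p) % n = i := by
  have hn : 0 < n := by omega
  let f : Fin n → Fin n := fun j => ⟨(j.1 * p) % n, Nat.mod_lt _ hn⟩
  have hf : Function.Injective f := by
    intro x y hxy
    have : (x.1 * p) % n = (y.1 * p) % n := congrArg Fin.val hxy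
    exact Fin.ext (aux_inj h x.2 y.2 this)
  obtain ⟨j, hj⟩ := (Finite.injective_iff_surjective.mp hf) ⟨i, hi⟩
  exact ⟨j.1, j.2, congrArg Fin.val hj⟩

/-- The cyclic word read with step `p`. -/
def stepWord (u v a b : Bool) (k j : ℕ) : Bool :=
  if j = 0 then u else if j < k then a else if j = k then v else b

lemma aux_getD (u v : Bool) (C : List Bool) (i : ℕ) (hi : i < C.length + 2) :
    (u :: C ++ [v]).getD i false =
      if i = 0 then u else if i = C.length + 1 then v else C.getD (i - 1) false := by
  rcases i with _ | i
  · simp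
  · by_cases h : i = C.length
    · subst h; simp
    · have h' : i < C.length := by omega
      simp [h, List.getElem?_append_left h']

lemma aux_key (C : List Bool) (p q : ℕ) (hc : Nat.Coprime p q) (hp : HasPeriod C p)
    (hq : HasPeriod C q) (hl : C.length + 2 = p + q) :
    ∃ k a b, 0 < k ∧ k < p + q ∧ (k * p) % (p + q) = p + q - 1 ∧
      ∀ u v, ∀ j < p + q,
        (u :: C ++ [v]).getD ((j * p) % (p + q)) false = stepWord u v a b k j := by
  have hcop : Nat.Coprime (p + q) p := by simpa [Nat.coprime_comm] using hc
  obtain ⟨hp0, hp⟩ := hp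
  obtain ⟨hq0, hq⟩ := hq
  obtain ⟨k, hk, hk1⟩ := aux_surj hcop (i := p + q - 1) (by omega)
  have hk0 : 0 < k := by
    rcases Nat.eq_zero_or_pos k with h | h
    · subst h; simp at hk1; omega
    · exact h
  have hne0 : ∀ j, 0 < j → j < p + q → (j * p) % (p + q) ≠ 0 := by
    intro j h1 h2 h3
    have := aux_inj hcop h2 (j := 0) (by omega) (by simpa using h3)
    omega
  have hnek : ∀ j, j < p + q → j ≠ k → (j * p) % (p + q) ≠ p + q - 1 := by
    intro j h1 h2 h3
    exact h2 (aux_inj hcop h1 hk (by rw [h3, hk1]))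
  let g : ℕ → Bool := fun j => C.getD ((j * p) % (p + q) - 1) false
  have hstep : ∀ j, 0 < j → j + 1 < p + q → j ≠ k → j + 1 ≠ k → g j = g (j + 1) := by
    intro j h1 h2 h3 h4
    have a1 := hne0 j h1 (by omega)
    have a2 := hnek j (by omega) h3
    have a3 := hne0 (j + 1) (by omega) h2
    have a4 := hnek (j + 1) h2 h4
    have hlt : (j * p) % (p + q) < p + q := Nat.mod_lt _ (by omega)
    have e : ((j + 1) * p) % (p + q) = ((j * p) % (p + q) + p) % (p + q) := by
      rw [Nat.mod_add_mod, add_mul, one_mul]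
    simp only [g]
    rw [e] at a3 a4 ⊢
    generalize (j * p) % (p + q) = r at *
    by_cases hr : r + p < p + q
    · rw [Nat.mod_eq_of_lt hr] at a3 a4 ⊢
      rw [hp (r - 1) (by omega)]
      congr 1; omega
    · have : (r + p) % (p + q) = r - q := by
        rw [Nat.mod_eq_sub_mod (by omega), Nat.mod_eq_of_lt (by omega)]; omega
      rw [this] at a3 a4 ⊢
      rw [hq (r - q - 1) (by omega)]
      congr 1; omega
  have hA : ∀ j, j + 1 < k → g (j + 1) = g 1 := by
    intro j
    induction j with
    | zero => intro _; rfl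
    | succ j ih =>
      intro h
      rw [← hstep (j + 1) (by omega) (by omega) (by omega) (by omega)]
      exact ih (by omega)
  have hB : ∀ j, k + 1 + j < p + q → g (k + 1 + j) = g (k + 1) := by
    intro j
    induction j with
    | zero => intro _; rfl
    | succ j ih =>
      intro h
      have := hstep (k + 1 + j) (by omega) (by omega) (by omega) (by omega)
      rw [← add_assoc, ← this]
      exact ih (by omega)
  refine ⟨k, g 1, g (k + 1), hk0, hk, hk1, ?_⟩
  intro u v j hj
  have hlt : (j * p) % (p + q) < p + q := Nat.mod_lt _ (by omega)
  rw [aux_getD _ _ _ _ (by omega)]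
  unfold stepWord
  by_cases j0 : j = 0
  · subst j0; simp
  · rw [if_neg (hne0 j (by omega) hj), if_neg j0]
    by_cases jk : j = k
    · subst jk
      rw [if_pos (by omega), if_neg (by omega), if_pos rfl]
    · have := hnek j hj jk
      rw [if_neg (by omega), if_neg jk]
      by_cases h : j < k
      · rw [if_pos h]
        have := hA (j - 1) (by omega)
        rwa [Nat.sub_add_cancel (by omega)] at this
      · rw [if_neg h]
        have := hB (j - (k + 1)) (by omega)
        rwa [Nat.add_sub_cancel' (by omega)] at this

lemma aux_ext {x y : List Bool} (n : ℕ) (hx : x.length = n) (hy : y.length = n)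
    (h : ∀ i < n, x.getD i false = y.getD i false) : x = y := by
  apply List.ext_getElem (by omega)
  intro i h1 h2
  have := h i (by omega)
  simpa [List.getD_eq_getElem?_getD, h1, h2] using this

lemma aux_fin (x y : List Bool) (s : ℕ) (hs : s ≤ x.length) (hy : y = x.rotate s)
    (hr : y = x.reverse) :
    ∃ U V : List Bool, U.Palindrome ∧ V.Palindrome ∧ x = U ++ V ∧ y = V ++ U := by
  rw [List.rotate_eq_drop_append_take hs] at hy
  have h : x.reverse = (x.drop s).reverse ++ (x.take s).reverse := by
    rw [← List.reverse_append, List.take_append_drop]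
  rw [← hr, hy] at h
  obtain ⟨h1, h2⟩ := List.append_inj h (by simp)
  exact ⟨x.take s, x.drop s, List.Palindrome.of_reverse_eq h2.symm,
    List.Palindrome.of_reverse_eq h1.symm, (List.take_append_drop s x).symm, hy⟩

lemma aux_rot (x : List Bool) (s i : ℕ) (hi : i < x.length) :
    (x.rotate s).getD i false = x.getD ((i + s) % x.length) false := by
  simp [List.getD_eq_getElem?_getD, List.getElem?_rotate hi]

/-- If `C` is a central word, then there exist palindromes `U`, `V` with
`0·C·1 = U·V` and `1·C·0 = V·U`; in particular `0·C·1` and `1·C·0` are conjugates. -/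
theorem stmt0 (C : List Bool) (hC : IsCentral C) :
    ∃ U V : List Bool, U.Palindrome ∧ V.Palindrome ∧
      false :: C ++ [true] = U ++ V ∧ true :: C ++ [false] = V ++ U := by
  obtain ⟨p, q, hc, hp, hq, hl⟩ := hC
  have hcop : Nat.Coprime (p + q) p := by simpa [Nat.coprime_comm] using hc
  have hp0 := hp.1
  have hq0 := hq.1
  obtain ⟨k, a, b, hk0, hk, hk1, H⟩ := aux_key C p q hc hp hq hl
  have hlen : ∀ u v : Bool, (u :: C ++ [v]).length = p + q := by
    intro u v; simp; omega
  -- reversal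
  have hrev : true :: C ++ [false] = (false :: C ++ [true]).reverse := by
    apply aux_ext (p + q) (hlen _ _) (by rw [List.length_reverse, hlen])
    intro i hi
    obtain ⟨j, hj, rfl⟩ := aux_surj hcop hi
    have e0 : (false :: C ++ [true]).reverse.getD ((j * p) % (p + q)) false
        = (false :: C ++ [true]).getD (p + q - 1 - (j * p) % (p + q)) false := by
      rw [List.getD_eq_getElem?_getD, List.getElem?_reverse (by rw [hlen]; exact hi), hlen,
        List.getD_eq_getElem?_getD]
    have key : ∀ m < p + q, (m + j = k ∨ m + j = k + (p + q)) →
        p + q - 1 - (j * p) % (p + q) = (m * p) % (p + q) := by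
      intro m hm h
      have h1 : ((m * p) % (p + q) + (j * p) % (p + q)) % (p + q) = p + q - 1 := by
        rw [← Nat.add_mod, ← add_mul]
        rcases h with h | h
        · rw [h, hk1]
        · rw [h, add_mul, Nat.add_mul_mod_self_left, hk1]
      have h2 : (m * p) % (p + q) < p + q := Nat.mod_lt _ (by omega)
      generalize (m * p) % (p + q) = r at *
      generalize (j * p) % (p + q) = t at *
      by_cases h3 : r + t < p + q
      · rw [Nat.mod_eq_of_lt h3] at h1; omega
      · rw [Nat.mod_eq_sub_mod (by omega), Nat.mod_eq_of_lt (by omega)] at h1; omega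
    rw [e0, H _ _ _ hj]
    by_cases hjk : j ≤ k
    · rw [key (k - j) (by omega) (by omega), H _ _ _ (by omega)]
      unfold stepWord
      split_ifs <;> first | rfl | omega
    · rw [key (k + (p + q) - j) (by omega) (by omega), H _ _ _ (by omega)]
      unfold stepWord
      split_ifs <;> first | rfl | omega
  have fin : ∀ s ≤ p + q, (∀ i < p + q, (true :: C ++ [false]).getD i false =
      (false :: C ++ [true]).getD ((i + s) % (p + q)) false) →
      ∃ U V : List Bool, U.Palindrome ∧ V.Palindrome ∧
      false :: C ++ [true] = U ++ V ∧ true :: C ++ [false] = V ++ U := by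
    intro s hs h
    refine aux_fin _ _ s (by rw [hlen]; exact hs) ?_ hrev
    apply aux_ext (p + q) (hlen _ _) (by rw [List.length_rotate, hlen])
    intro i hi
    rw [aux_rot _ _ _ (by rw [hlen]; exact hi), hlen]
    exact h i hi
  -- when `a = b`, every inner letter equals `a`
  have hconst : a = b → ∀ u v, ∀ i < p + q, (u :: C ++ [v]).getD i false =
      if i = 0 then u else if i = p + q - 1 then v else a := by
    intro hab u v i hi
    obtain ⟨j, hj, rfl⟩ := aux_surj hcop hi
    rw [H _ _ _ hj]
    unfold stepWord
    by_cases j0 : j = 0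
    · subst j0; simp
    · have : (j * p) % (p + q) ≠ 0 := by
        intro h3
        exact j0 (aux_inj hcop hj (j := 0) (by omega) (by simpa using h3))
      rw [if_neg j0, if_neg this]
      by_cases jk : j = k
      · subst jk
        rw [if_neg (by omega), if_pos rfl, if_pos hk1]
      · have : (j * p) % (p + q) ≠ p + q - 1 := by
          intro h3
          exact jk (aux_inj hcop hj hk (by rw [h3, hk1]))
        rw [if_neg this, if_neg jk, hab, ite_self]
  have hmod : ∀ i < p + q, ∀ s < p + q, (i + s) % (p + q) =
      if i + s < p + q then i + s else i + s - (p + q) := by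
    intro i hi s hs
    split_ifs with h
    · exact Nat.mod_eq_of_lt h
    · rw [Nat.mod_eq_sub_mod (by omega), Nat.mod_eq_of_lt (by omega)]
  by_cases hab : a = b
  · have hconst := hconst hab
    cases a
    · apply fin (p + q - 1) (by omega)
      intro i hi
      rw [hconst _ _ _ hi, hconst _ _ _ (Nat.mod_lt _ (by omega)), hmod i hi _ (by omega)]
      split_ifs <;> first | rfl | omega
    · apply fin 1 (by omega)
      intro i hi
      rw [hconst _ _ _ hi, hconst _ _ _ (Nat.mod_lt _ (by omega)), hmod i hi _ (by omega)]
      split_ifs <;> first | rfl | omega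
  · have hsh : ∀ j s, ((j * p) % (p + q) + (s * p) % (p + q)) % (p + q) =
        (((j + s) % (p + q)) * p) % (p + q) := by
      intro j s
      rw [← Nat.add_mod, ← add_mul, Nat.mod_mul_mod]
    have gen : ∀ s < p + q, (∀ j < p + q, stepWord true false a b k j =
        stepWord false true a b k ((j + s) % (p + q))) →
        ∃ U V : List Bool, U.Palindrome ∧ V.Palindrome ∧
        false :: C ++ [true] = U ++ V ∧ true :: C ++ [false] = V ++ U := by
      intro s hs h
      apply fin ((s * p) % (p + q)) (Nat.mod_lt _ (by omega)).le
      intro i hi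
      obtain ⟨j, hj, rfl⟩ := aux_surj hcop hi
      rw [hsh, H _ _ _ hj, H _ _ _ (Nat.mod_lt _ (by omega))]
      exact h j hj
    cases a <;> cases b
    · exact absurd rfl hab
    · apply gen (p + q - 1) (by omega)
      intro j hj
      rw [hmod j hj _ (by omega)]
      unfold stepWord
      split_ifs <;> first | rfl | omega
    · apply gen 1 (by omega)
      intro j hj
      rw [hmod j hj _ (by omega)]
      unfold stepWord
      split_ifs <;> first | rfl | omega
    · exact absurd rfl hab
end

section
/- A binary word w is a central word if and only if w is a power of a single letter (possibly the empty word) or there exist palindromes P and Q such that w = P·01·Q = Q·10·P. Moreover, in the latter case, P and Q are central words, the integers |P|+2 and |Q|+2 are coprime, and both |P|+2 and |Q|+2 are periods of w. -/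
/-- The cyclic reading of a word. -/
def cyc (w : List Bool) (n : ℕ) (z : ZMod n) : Bool := w.getD z.val false

theorem cyc_step (w : List Bool) (p q : ℕ) (hp : HasPeriod w p) (hq : HasPeriod w q)
    (hl : w.length + 2 = p + q) (z : ZMod (p + q)) (h1 : z ≠ -1) (h2 : z ≠ -2)
    (h3 : z + p ≠ -1) (h4 : z + p ≠ -2) : cyc w (p + q) (z + p) = cyc w (p + q) z := by
  have hp0 := hp.1
  have hq0 := hq.1
  have : NeZero (p + q) := ⟨by omega⟩
  obtain ⟨i, hi, rfl⟩ : ∃ i : ℕ, i < p + q ∧ (i : ZMod (p + q)) = z :=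
    ⟨z.val, ZMod.val_lt z, ZMod.natCast_zmod_val z⟩
  have hn : ((p : ZMod (p + q)) + q) = 0 := by
    have := ZMod.natCast_self (p + q)
    push_cast at this
    exact this
  have e1 : ∀ j : ℕ, j + 1 = p + q → (j : ZMod (p + q)) = -1 := by
    intro j hj
    have : ((j + 1 : ℕ) : ZMod (p + q)) = 0 := by rw [hj]; exact ZMod.natCast_self _
    push_cast at this
    linear_combination this
  have e2 : ∀ j : ℕ, j + 2 = p + q → (j : ZMod (p + q)) = -2 := by
    intro j hj
    have : ((j + 2 : ℕ) : ZMod (p + q)) = 0 := by rw [hj]; exact ZMod.natCast_self _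
    push_cast at this
    linear_combination this
  have hi1 : i + 1 ≠ p + q := fun h => h1 (e1 i h)
  have hi2 : i + 2 ≠ p + q := fun h => h2 (e2 i h)
  unfold cyc
  by_cases hiq : i < q
  · have hi3 : i + p + 1 ≠ p + q := fun h => h3 (by have := e1 (i + p) h; push_cast at this; exact this)
    have hi4 : i + p + 2 ≠ p + q := fun h => h4 (by have := e2 (i + p) h; push_cast at this; exact this)
    have : ((i : ZMod (p + q)) + p) = ((i + p : ℕ) : ZMod (p + q)) := by push_cast; rfl
    rw [this, ZMod.val_natCast, ZMod.val_natCast, Nat.mod_eq_of_lt hi, Nat.mod_eq_of_lt (by omega)]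
    exact (hp.2 i (by omega)).symm
  · obtain ⟨k, rfl⟩ : ∃ k, i = k + q := ⟨i - q, by omega⟩
    have : (((k + q : ℕ) : ZMod (p + q)) + p) = (k : ZMod (p + q)) := by
      push_cast; linear_combination hn
    rw [this, ZMod.val_natCast, ZMod.val_natCast, Nat.mod_eq_of_lt hi, Nat.mod_eq_of_lt (by omega)]
    exact hq.2 k (by omega)

theorem cyc_chain (w : List Bool) (p q : ℕ) (hp : HasPeriod w p) (hq : HasPeriod w q)
    (hl : w.length + 2 = p + q) (s : ZMod (p + q)) (m : ℕ)
    (h : ∀ j : ℕ, 0 < j → j < m → s + j * p ≠ -1 ∧ s + j * p ≠ -2) :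
    ∀ j : ℕ, 0 < j → j < m → cyc w (p + q) (s + j * p) = cyc w (p + q) (s + p) := by
  intro j
  induction j with
  | zero => intro h; omega
  | succ j ih =>
    intro _ hj
    rcases Nat.eq_zero_or_pos j with rfl | hj0
    · simp
    · rw [← ih hj0 (by omega)]
      have a := h j hj0 (by omega)
      have b := h (j + 1) (by omega) hj
      have e : s + ((j + 1 : ℕ) : ZMod (p + q)) * p = s + j * p + p := by push_cast; ring
      rw [e] at b ⊢
      exact cyc_step w p q hp hq hl _ a.1 a.2 b.1 b.2

theorem cyc_val (w : List Bool) (n i : ℕ) (h : i < n) : cyc w n (i : ZMod n) = w.getD i false := by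
  unfold cyc; rw [ZMod.val_natCast, Nat.mod_eq_of_lt h]

theorem coprime_of_ne (w : List Bool) (p q : ℕ) (hp : HasPeriod w p) (hq : HasPeriod w q)
    (hl : w.length + 2 = p + q) (h2p : 2 ≤ p) (h2q : 2 ≤ q)
    (hne : w.getD (p - 2) false ≠ w.getD (q - 2) false) : Nat.Coprime p q := by
  have : NeZero (p + q) := ⟨by omega⟩
  have hn : ((p : ZMod (p + q)) + q) = 0 := by
    have := ZMod.natCast_self (p + q)
    push_cast at this
    exact this
  by_contra hc
  apply hne
  have hu : ∀ j : ℕ, (j : ZMod (p + q)) * p ≠ 1 := by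
    intro j hj
    apply hc
    have : IsUnit (p : ZMod (p + q)) := IsUnit.of_mul_eq_one_right _ hj
    rw [ZMod.isUnit_iff_coprime] at this
    simpa using this
  have hm : 0 < addOrderOf (p : ZMod (p + q)) := addOrderOf_pos _
  have hm1 : addOrderOf (p : ZMod (p + q)) ≠ 1 := by
    intro h
    rw [AddMonoid.addOrderOf_eq_one_iff, ZMod.natCast_eq_zero_iff] at h
    have := Nat.le_of_dvd (by omega) h
    omega
  have key := cyc_chain w p q hp hq hl (-2) (addOrderOf (p : ZMod (p + q))) (by
    intro j hj hjm
    constructor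
    · intro h
      exact hu j (by linear_combination h)
    · intro h
      have h0 : j • (p : ZMod (p + q)) = 0 := by rw [nsmul_eq_mul]; linear_combination h
      have := Nat.le_of_dvd hj (addOrderOf_dvd_of_nsmul_eq_zero h0)
      omega) (addOrderOf (p : ZMod (p + q)) - 1) (by omega) (by omega)
  have ho : (addOrderOf (p : ZMod (p + q)) : ZMod (p + q)) * p = 0 := by
    rw [← nsmul_eq_mul]; exact addOrderOf_nsmul_eq_zero _
  rw [Nat.cast_sub (by omega)] at key
  have ea : (-2 : ZMod (p + q)) + ((addOrderOf (p : ZMod (p + q)) : ZMod (p + q)) - (1 : ℕ)) * p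
      = ((q - 2 : ℕ) : ZMod (p + q)) := by
    rw [Nat.cast_sub h2q]; push_cast; linear_combination ho - hn
  have eb : (-2 : ZMod (p + q)) + p = ((p - 2 : ℕ) : ZMod (p + q)) := by
    rw [Nat.cast_sub h2p]; push_cast; ring
  rw [ea, eb, cyc_val _ _ _ (by omega), cyc_val _ _ _ (by omega)] at key
  exact key.symm

theorem cyc_main (w : List Bool) (p q : ℕ) (hp : HasPeriod w p) (hq : HasPeriod w q)
    (hl : w.length + 2 = p + q) (hc : Nat.Coprime p q) (z : ZMod (p + q))
    (h1 : z ≠ -1) (h2 : z ≠ -2) :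
    (cyc w (p + q) z = cyc w (p + q) (-2 + p) ∨ cyc w (p + q) z = cyc w (p + q) (-1 + p)) ∧
    cyc w (p + q) (-3 - z) = cyc w (p + q) z := by
  have hp0 := hp.1
  have hq0 := hq.1
  have : NeZero (p + q) := ⟨by omega⟩
  have hu : IsUnit (p : ZMod (p + q)) := by
    rw [ZMod.isUnit_iff_coprime]; simpa using hc
  obtain ⟨r, hr⟩ := hu.exists_left_inv
  obtain ⟨K, hK, rfl⟩ : ∃ i : ℕ, i < p + q ∧ (i : ZMod (p + q)) = r :=
    ⟨r.val, ZMod.val_lt r, ZMod.natCast_zmod_val r⟩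
  have inj : ∀ i j : ℕ, i < p + q → j < p + q →
      (i : ZMod (p + q)) * p = (j : ZMod (p + q)) * p → i = j := by
    intro i j hi hj h
    have h' := hu.mul_right_cancel h
    rw [ZMod.natCast_eq_natCast_iff'] at h'
    rwa [Nat.mod_eq_of_lt hi, Nat.mod_eq_of_lt hj] at h'
  have A := cyc_chain w p q hp hq hl (-2) K (by
    intro j hj hjK
    constructor
    · intro h
      have := inj j K (by omega) hK (by linear_combination h - hr)
      omega
    · intro h
      have := inj j 0 (by omega) (by omega) (by push_cast; linear_combination h)
      omega)
  have B := cyc_chain w p q hp hq hl (-1) (p + q - K) (by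
    intro j hj hjK
    constructor
    · intro h
      have := inj j 0 (by omega) (by omega) (by push_cast; linear_combination h)
      omega
    · intro h
      have := inj (j + K) 0 (by omega) (by omega) (by push_cast; linear_combination h + hr)
      omega)
  obtain ⟨j, hj, hjz⟩ : ∃ j : ℕ, j < p + q ∧ (j : ZMod (p + q)) * p = z + 2 := by
    refine ⟨((z + 2) * K).val, ZMod.val_lt _, ?_⟩
    rw [ZMod.natCast_zmod_val]; linear_combination (z + 2) * hr
  have hj0 : j ≠ 0 := by
    rintro rfl
    apply h2
    push_cast at hjz
    linear_combination -hjz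
  have hjK : j ≠ K := by
    rintro rfl
    apply h1
    linear_combination hr - hjz
  have hn : ((p : ZMod (p + q)) + q) = 0 := by
    have := ZMod.natCast_self (p + q)
    push_cast at this
    exact this
  rcases lt_or_gt_of_ne hjK with h | h
  · have a := A j (by omega) h
    have b := A (K - j) (by omega) (by omega)
    rw [Nat.cast_sub h.le] at b
    have ez : z = -2 + j * p := by linear_combination -hjz
    have ez' : -3 - z = -2 + ((K : ZMod (p + q)) - j) * p := by linear_combination hjz - hr
    rw [ez', b, ez, a]
    exact ⟨Or.inl rfl, rfl⟩
  · have a := B (j - K) (by omega) (by omega)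
    have b := B (p + q - j) (by omega) (by omega)
    rw [Nat.cast_sub h.le] at a
    rw [Nat.cast_sub hj.le, Nat.cast_add, hn] at b
    have ez : z = -1 + ((j : ZMod (p + q)) - K) * p := by linear_combination hr - hjz
    have ez' : -3 - z = -1 + (0 - (j : ZMod (p + q))) * p := by linear_combination hjz
    rw [ez', b, ez, a]
    exact ⟨Or.inr rfl, rfl⟩

theorem word_main (w : List Bool) (p q : ℕ) (hp : HasPeriod w p) (hq : HasPeriod w q)
    (hl : w.length + 2 = p + q) (hc : Nat.Coprime p q) (h2p : 2 ≤ p) (i : ℕ)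
    (hi : i < w.length) :
    (w.getD i false = w.getD (p - 2) false ∨ w.getD i false = w.getD (p - 1) false) ∧
    w.getD (w.length - 1 - i) false = w.getD i false := by
  have hq0 := hq.1
  have hn : ((p : ZMod (p + q)) + q) = 0 := by
    have := ZMod.natCast_self (p + q)
    push_cast at this
    exact this
  have key := cyc_main w p q hp hq hl hc (i : ZMod (p + q)) (by
    intro h
    have : ((i + 1 : ℕ) : ZMod (p + q)) = 0 := by push_cast; linear_combination h
    rw [ZMod.natCast_eq_zero_iff] at this
    have := Nat.le_of_dvd (by omega) this
    omega) (by
    intro h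
    have : ((i + 2 : ℕ) : ZMod (p + q)) = 0 := by push_cast; linear_combination h
    rw [ZMod.natCast_eq_zero_iff] at this
    have := Nat.le_of_dvd (by omega) this
    omega)
  have e1 : (-2 : ZMod (p + q)) + p = ((p - 2 : ℕ) : ZMod (p + q)) := by
    rw [Nat.cast_sub h2p]; push_cast; ring
  have e2 : (-1 : ZMod (p + q)) + p = ((p - 1 : ℕ) : ZMod (p + q)) := by
    rw [Nat.cast_sub (by omega)]; push_cast; ring
  have e3 : (-3 : ZMod (p + q)) - i = ((w.length - 1 - i : ℕ) : ZMod (p + q)) := by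
    have : ((w.length - 1 - i + i + 3 : ℕ) : ZMod (p + q)) = 0 := by
      rw [show w.length - 1 - i + i + 3 = p + q by omega]; exact ZMod.natCast_self _
    push_cast at this
    linear_combination -this
  rw [e1, e2, e3, cyc_val _ _ _ (by omega), cyc_val _ _ _ (by omega), cyc_val _ _ _ (by omega),
    cyc_val _ _ _ (by omega)] at key
  exact key

theorem rep_of_getD (w : List Bool) (x : Bool) (h : ∀ i, i < w.length → w.getD i false = x) :
    w = List.replicate w.length x := by
  apply List.ext_getElem (by simp)
  intro i h1 h2
  have := h i h1
  rw [List.getD_eq_getElem _ _ h1] at this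
  simpa using this

theorem rep_of_one (w : List Bool) (h : HasPeriod w 1) :
    ∃ (x : Bool) (n : ℕ), w = List.replicate n x := by
  refine ⟨w.getD 0 false, w.length, rep_of_getD w _ ?_⟩
  intro i
  induction i with
  | zero => intro _; rfl
  | succ i ih =>
    intro hi
    rw [← h.2 i hi]
    exact ih (by omega)

theorem decomp (w : List Bool) (p q : ℕ) (hp : HasPeriod w p)
    (hl : w.length + 2 = p + q) (h2p : 2 ≤ p) (h2q : 2 ≤ q) :
    w = w.take (p - 2) ++ [w.getD (p - 2) false, w.getD (p - 1) false] ++ w.take (q - 2) := by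
  apply List.ext_getElem
  · simp; omega
  intro i h1 h2
  rw [← List.getD_eq_getElem _ false h1, ← List.getD_eq_getElem _ false h2]
  rcases lt_trichotomy i (p - 2) with h | h | h
  · simp [List.getElem?_append, List.getElem?_take]
    grind
  · simp [List.getElem?_append, List.getElem?_take]
    grind
  · by_cases h' : i = p - 1
    · simp [List.getElem?_append, List.getElem?_take]
      grind
    · have := hp.2 (i - p) (by omega)
      rw [Nat.sub_add_cancel (by omega)] at this
      rw [← this]
      simp [List.getElem?_append, List.getElem?_take]
      grind

/-- shift by multiples of a period -/
theorem period_mul (w : List Bool) (p : ℕ) (hp : HasPeriod w p) (k i : ℕ)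
    (h : i + k * p < w.length) : w.getD (i + k * p) false = w.getD i false := by
  induction k with
  | zero => simp
  | succ k ih =>
    have e : i + (k + 1) * p = i + k * p + p := by ring
    rw [e] at h ⊢
    rw [← hp.2 _ h]
    exact ih (by omega)

theorem prefix_central (w P R : List Bool) (p q : ℕ) (hp : HasPeriod w p) (hq : HasPeriod w q)
    (hl : w.length + 2 = p + q) (hc : Nat.Coprime p q) (hP : P.length + 2 = p)
    (hw : w = P ++ R) : IsCentral P := by
  have hg : ∀ i, i < P.length → P.getD i false = w.getD i false := by
    intro i hi
    rw [hw, List.getD_append _ _ _ _ hi]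
  have hr : q % p < p := Nat.mod_lt _ hp.1
  have hr0 : 0 < q % p := by
    rcases Nat.eq_zero_or_pos (q % p) with h | h
    · have := Nat.eq_one_of_dvd_coprimes hc dvd_rfl (Nat.dvd_of_mod_eq_zero h)
      omega
    · exact h
  have hd : q % p + q / p * p = q := by rw [mul_comm]; exact Nat.mod_add_div q p
  have hc' : Nat.Coprime (q % p) p := by
    have : Nat.gcd p q = 1 := hc
    rw [Nat.gcd_rec] at this
    exact this
  refine ⟨q % p, p - q % p, ?_, ⟨hr0, ?_⟩, ⟨by omega, ?_⟩, by omega⟩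
  · exact (Nat.coprime_sub_self_right hr.le).2 hc'
  · intro i hi
    rw [hg _ hi, hg i (by omega), hq.2 i (by omega)]
    have := period_mul w p hp (q / p) (i + q % p) (by omega)
    rw [← this]
    congr 1
    omega
  · intro i hi
    rw [hg _ hi, hg i (by omega), hq.2 (i + (p - q % p)) (by omega)]
    have e : i + (q / p + 1) * p = i + (p - q % p) + q := by
      rw [add_mul]; omega
    rw [← e]
    exact (period_mul w p hp _ i (by omega)).symm

theorem period_of_decomp (w P Q : List Bool) (a b c d : Bool)
    (h1 : w = P ++ [a, b] ++ Q) (h2 : w = Q ++ [c, d] ++ P) : HasPeriod w (P.length + 2) := by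
  refine ⟨by omega, ?_⟩
  intro i hi
  have hl : w.length = P.length + 2 + Q.length := by rw [h1]; simp; omega
  have e1 : w.getD i false = Q.getD i false := by
    rw [h2, List.append_assoc, List.getD_append _ _ _ _ (by omega)]
  rw [e1, h1, List.getD_append_right _ _ _ _ (by simp)]
  congr 1
  simp

theorem part_two (w P Q : List Bool) (h1 : w = P ++ [false, true] ++ Q)
    (h2 : w = Q ++ [true, false] ++ P) :
    IsCentral P ∧ IsCentral Q ∧ Nat.Coprime (P.length + 2) (Q.length + 2) ∧
        HasPeriod w (P.length + 2) ∧ HasPeriod w (Q.length + 2) := by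
  have hp := period_of_decomp w P Q _ _ _ _ h1 h2
  have hq := period_of_decomp w Q P _ _ _ _ h2 h1
  have hl : w.length + 2 = (P.length + 2) + (Q.length + 2) := by rw [h1]; simp; omega
  have hc := coprime_of_ne w _ _ hp hq hl (by omega) (by omega) (by
    have a : w.getD (P.length + 2 - 2) false = false := by rw [h1]; simp
    have b : w.getD (Q.length + 2 - 2) false = true := by rw [h2]; simp
    rw [a, b]; simp)
  refine ⟨?_, ?_, hc, hp, hq⟩
  · exact prefix_central w P ([false, true] ++ Q) _ _ hp hq hl hc rfl (by rw [h1]; simp)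
  · exact prefix_central w Q ([true, false] ++ P) _ _ hq hp (by omega) hc.symm rfl (by rw [h2]; simp)

theorem part_one (w : List Bool) (h : IsCentral w) :
    (∃ (x : Bool) (n : ℕ), w = List.replicate n x) ∨
        ∃ P Q : List Bool, P.Palindrome ∧ Q.Palindrome ∧
          w = P ++ [false, true] ++ Q ∧ w = Q ++ [true, false] ++ P := by
  obtain ⟨p, q, hc, hp, hq, hl⟩ := h
  by_cases hp1 : p = 1
  · subst hp1; exact Or.inl (rep_of_one w hp)
  by_cases hq1 : q = 1
  · subst hq1; exact Or.inl (rep_of_one w hq)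
  have hp0 := hp.1
  have hq0 := hq.1
  have h2p : 2 ≤ p := by omega
  have h2q : 2 ≤ q := by omega
  have key := word_main w p q hp hq hl hc h2p
  have d1 := decomp w p q hp hl h2p h2q
  have d2 := decomp w q p hq (by omega) h2q h2p
  have hrev : w.reverse = w := by
    apply List.ext_getElem (by simp)
    intro i h1 h2
    rw [List.getElem_reverse]
    have := (key i h2).2
    rwa [List.getD_eq_getElem _ _ h2, List.getD_eq_getElem _ _ (by omega)] at this
  have hlP : (w.take (p - 2)).length = p - 2 := by simp; omega
  have hlQ : (w.take (q - 2)).length = q - 2 := by simp; omega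
  have hconst : w.getD (p - 2) false = w.getD (p - 1) false →
      ∃ (x : Bool) (n : ℕ), w = List.replicate n x := by
    intro e
    refine ⟨_, _, rep_of_getD w (w.getD (p - 2) false) ?_⟩
    intro i hi
    rcases (key i hi).1 with h | h
    · exact h
    · rw [h, e]
  generalize w.getD (p - 2) false = x at *
  generalize w.getD (p - 1) false = y at *
  generalize w.getD (q - 2) false = x' at *
  generalize w.getD (q - 1) false = y' at *
  generalize w.take (p - 2) = P at *
  generalize w.take (q - 2) = Q at *
  have d3 : P ++ ([x, y] ++ Q) = P.reverse ++ ([y', x'] ++ Q.reverse) := by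
    rw [← List.append_assoc, ← d1, ← hrev, d2]; simp
  obtain ⟨eP, e⟩ := List.append_inj d3 (by simp)
  obtain ⟨e, eQ⟩ := List.append_inj e (by simp)
  simp at e
  obtain ⟨rfl, rfl⟩ := e
  have pP := List.Palindrome.of_reverse_eq eP.symm
  have pQ := List.Palindrome.of_reverse_eq eQ.symm
  cases x <;> cases y
  · exact Or.inl (hconst rfl)
  · exact Or.inr ⟨P, Q, pP, pQ, d1, d2⟩
  · exact Or.inr ⟨Q, P, pQ, pP, d2, d1⟩
  · exact Or.inl (hconst rfl)

/-- Structure theorem for central words. -/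
theorem stmt1 (w : List Bool) :
    (IsCentral w ↔
      ((∃ (x : Bool) (n : ℕ), w = List.replicate n x) ∨
        ∃ P Q : List Bool, P.Palindrome ∧ Q.Palindrome ∧
          w = P ++ [false, true] ++ Q ∧ w = Q ++ [true, false] ++ P)) ∧
    (∀ P Q : List Bool, P.Palindrome → Q.Palindrome →
      w = P ++ [false, true] ++ Q → w = Q ++ [true, false] ++ P →
      IsCentral P ∧ IsCentral Q ∧ Nat.Coprime (P.length + 2) (Q.length + 2) ∧
        HasPeriod w (P.length + 2) ∧ HasPeriod w (Q.length + 2)) := by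
  refine ⟨⟨part_one w, ?_⟩, fun P Q _ _ h1 h2 => part_two w P Q h1 h2⟩
  rintro (⟨x, n, rfl⟩ | ⟨P, Q, _, _, h1, h2⟩)
  · refine ⟨1, n + 1, by simp, ⟨by omega, ?_⟩, ⟨by omega, ?_⟩, by simp; omega⟩
    · intro i hi
      simp only [List.length_replicate] at hi
      rw [List.getD_replicate _ (by omega), List.getD_replicate _ (by omega)]
    · intro i hi
      simp only [List.length_replicate] at hi
      omega
  · obtain ⟨_, _, hc, hp, hq⟩ := part_two w P Q h1 h2
    exact ⟨_, _, hc, hp, hq, by rw [h1]; simp; omega⟩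
end

section
/- A binary word is a primitive lower Christoffel word (i.e., equals w_{a,b} for some coprime nonnegative integers a, b not both zero) if and only if it has length 1 or it is of the form 0·C·1 for a central word C. Similarly, a binary word is a primitive upper Christoffel word if and only if it has length 1 or it is of the form 1·C·0 for a central word C. -/
/-- The central word of slope `(a,b)`. -/
def cw (a b : ℕ) : List Bool :=
  (List.range (a + b - 2)).map fun i => decide (a < (i + 1) * b % (a + b))

lemma low_letter (a b i : ℕ) (ha : 0 < a) :
    ((i + 1) * b / (a + b) ≠ i * b / (a + b)) ↔ a ≤ i * b % (a + b) := by
  have hn : 0 < a + b := by omega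
  have h1 := Nat.div_add_mod (i * b) (a + b)
  have h2 := Nat.mod_lt (i * b) hn
  set m := i * b / (a + b)
  set r := i * b % (a + b)
  have h3 : (i + 1) * b = r + b + (a + b) * m := by rw [add_mul, ← h1]; ring
  rw [h3, Nat.add_mul_div_left _ _ hn]
  have : (r + b) / (a + b) = 0 ↔ r + b < a + b := by
    rw [Nat.div_eq_zero_iff]; omega
  omega

lemma up_letter (a b i : ℕ) (ha : 0 < a) (hb : 0 < b) :
    (((i + 1) * b + (a + b) - 1) / (a + b) ≠ (i * b + (a + b) - 1) / (a + b)) ↔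
      (i * b % (a + b) = 0 ∨ a < i * b % (a + b)) := by
  have hn : 0 < a + b := by omega
  have h1 := Nat.div_add_mod (i * b) (a + b)
  have h2 := Nat.mod_lt (i * b) hn
  set m := i * b / (a + b)
  set r := i * b % (a + b)
  have h3 : (i + 1) * b + (a + b) - 1 = (r + b + (a + b) - 1) + (a + b) * m := by
    rw [add_mul, ← h1]; omega
  have h4 : i * b + (a + b) - 1 = (r + (a + b) - 1) + (a + b) * m := by
    rw [← h1]; omega
  rw [h3, h4, Nat.add_mul_div_left _ _ hn, Nat.add_mul_div_left _ _ hn]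
  have e1 : (r + b + (a + b) - 1) = (r + b - 1) + (a + b) := by omega
  rw [e1, Nat.add_div_right _ hn]
  have : (r + b - 1) / (a + b) = 0 ↔ r + b - 1 < a + b := by
    rw [Nat.div_eq_zero_iff]; omega
  have h6 : (r + b - 1) / (a + b) ≤ 1 := by
    apply Nat.le_of_lt_succ
    rw [Nat.div_lt_iff_lt_mul hn]; omega
  by_cases hr : r = 0
  · have : (r + (a + b) - 1) / (a + b) = 0 := by
      rw [Nat.div_eq_zero_iff]; omega
    omega
  · have e2 : r + (a + b) - 1 = (r - 1) + (a + b) := by omega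
    rw [e2, Nat.add_div_right _ hn]
    have : (r - 1) / (a + b) = 0 := by
      rw [Nat.div_eq_zero_iff]; omega
    omega

lemma pos_of_coprime {a b : ℕ} (h : Nat.Coprime a b) (h2 : 2 ≤ a + b) : 0 < a ∧ 0 < b := by
  constructor
  · rcases Nat.eq_zero_or_pos a with rfl | hpos
    · simp at h; omega
    · exact hpos
  · rcases Nat.eq_zero_or_pos b with rfl | hpos
    · simp at h; omega
    · exact hpos

/-- Residue of `j` is zero only for `j = 0`. -/
lemma res_inj {n b i j : ℕ} (h : Nat.Coprime n b) (hi : i < n) (hj : j < n)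
    (he : i * b % n = j * b % n) : i = j := by
  have h1 : i * b ≡ j * b [MOD n] := he
  have h2 := Nat.ModEq.cancel_right_of_coprime h h1
  exact Nat.ModEq.eq_of_lt_of_lt h2 hi hj

lemma res_last {a b : ℕ} (ha : 0 < a) (hb : 0 < b) : (a + b - 1) * b % (a + b) = a := by
  obtain ⟨c, rfl⟩ : ∃ c, b = c + 1 := ⟨b - 1, by omega⟩
  have : (a + (c + 1) - 1) * (c + 1) = a + (a + (c + 1)) * c := by
    have : a + (c + 1) - 1 = a + c := by omega
    rw [this]; ring
  rw [this, Nat.add_mul_mod_self_left, Nat.mod_eq_of_lt (by omega)]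

lemma res_mid {a b : ℕ} (h : Nat.Coprime a b) (ha : 0 < a) (hb : 0 < b) {j : ℕ} (hj : 0 < j)
    (hj2 : j + 1 < a + b) : j * b % (a + b) ≠ 0 ∧ j * b % (a + b) ≠ a := by
  have hc : Nat.Coprime (a + b) b := by simpa using h
  constructor
  · intro h0
    have := res_inj (i := j) (j := 0) hc (by omega) (by omega) (by simpa using h0)
    omega
  · intro h0
    have := res_inj (i := j) (j := a + b - 1) hc (by omega) (by omega)
      (by rw [h0, res_last ha hb])
    omega

lemma range_split (m : ℕ) (f : ℕ → Bool) :
    (List.range (m + 2)).map f =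
      f 0 :: ((List.range m).map fun i => f (i + 1)) ++ [f (m + 1)] := by
  rw [List.range_succ, List.range_succ_eq_map]
  simp [Function.comp_def]

lemma lower_eq {a b : ℕ} (h : Nat.Coprime a b) (h2 : 2 ≤ a + b) :
    lowerChristoffel a b = false :: cw a b ++ [true] := by
  obtain ⟨ha, hb⟩ := pos_of_coprime h h2
  unfold lowerChristoffel cw
  simp only [low_letter a b _ ha]
  obtain ⟨m, hm⟩ : ∃ m, a + b = m + 2 := ⟨a + b - 2, by omega⟩
  have hl := res_last ha hb
  have hmid := fun j => @res_mid a b h ha hb j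
  rw [hm] at hl hmid ⊢
  rw [range_split]
  congr 1
  · congr 1
    · simp; omega
    · apply List.map_congr_left
      intro i hi
      simp only [Nat.add_sub_cancel, List.mem_range] at hi
      have := (hmid (i + 1) (by omega) (by omega)).2
      simp only [decide_eq_decide]; omega
  · have : m + 2 - 1 = m + 1 := by omega
    rw [this] at hl
    simp [hl]

lemma upper_eq {a b : ℕ} (h : Nat.Coprime a b) (h2 : 2 ≤ a + b) :
    upperChristoffel a b = true :: cw a b ++ [false] := by
  obtain ⟨ha, hb⟩ := pos_of_coprime h h2
  unfold upperChristoffel cw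
  simp only [up_letter a b _ ha hb]
  obtain ⟨m, hm⟩ : ∃ m, a + b = m + 2 := ⟨a + b - 2, by omega⟩
  have hl := res_last ha hb
  have hmid := fun j => @res_mid a b h ha hb j
  rw [hm] at hl hmid ⊢
  rw [range_split]
  congr 1
  · congr 1
    · simp
    · apply List.map_congr_left
      intro i hi
      simp only [Nat.add_sub_cancel, List.mem_range] at hi
      have := (hmid (i + 1) (by omega) (by omega)).1
      simp only [decide_eq_decide]; omega
  · have : m + 2 - 1 = m + 1 := by omega
    rw [this] at hl
    simp [hl]; omega

lemma cw_length (a b : ℕ) : (cw a b).length = a + b - 2 := by simp [cw]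

lemma cw_getD {a b i : ℕ} (hi : i < a + b - 2) :
    (cw a b).getD i false = decide (a < (i + 1) * b % (a + b)) := by
  simp [cw, List.getD_eq_getElem?_getD, hi]

/-- inverse modulo `n` -/
lemma exists_inv {n b : ℕ} (hn : 2 ≤ n) (h : Nat.Coprime b n) :
    ∃ p, 0 < p ∧ p < n ∧ p * b % n = 1 ∧ Nat.Coprime p n := by
  obtain ⟨p, hp, hpb⟩ := Nat.exists_mul_mod_eq_one_of_coprime h (by omega)
  rw [mul_comm] at hpb
  refine ⟨p, ?_, hp, hpb, ?_⟩
  · rcases Nat.eq_zero_or_pos p with rfl | hpos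
    · simp at hpb
    · exact hpos
  · have : p * b ≡ 1 [MOD n] := by
      unfold Nat.ModEq; rw [hpb, Nat.mod_eq_of_lt (by omega)]
    have h3 : Nat.Coprime (p * b) n := by
      have := this.gcd_eq; simpa [Nat.Coprime] using this
    exact h3.coprime_mul_right

lemma succ_mod (n x : ℕ) (hn : 2 ≤ n) :
    (x + 1) % n = if x % n + 1 = n then 0 else x % n + 1 := by
  have := Nat.mod_lt x (show 0 < n by omega)
  split_ifs with h
  · rw [Nat.add_mod, Nat.mod_eq_of_lt (show 1 < n by omega), h, Nat.mod_self]
  · rw [Nat.add_mod, Nat.mod_eq_of_lt (show 1 < n by omega), Nat.mod_eq_of_lt]; omega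

lemma res_add {n b p j : ℕ} (hn : 2 ≤ n) (hp : p * b % n = 1) :
    (j + p) * b % n = if j * b % n + 1 = n then 0 else j * b % n + 1 := by
  rw [← succ_mod n _ hn, add_mul, Nat.add_mod, hp, Nat.add_mod (j * b) 1,
    Nat.mod_eq_of_lt (show 1 < n by omega)]

lemma cw_central {a b : ℕ} (h : Nat.Coprime a b) (h2 : 2 ≤ a + b) : IsCentral (cw a b) := by
  obtain ⟨ha, hb⟩ := pos_of_coprime h h2
  have hc : Nat.Coprime b (a + b) := by simpa using h.symm
  obtain ⟨p, hp0, hpn, hpb, hpc⟩ := exists_inv h2 hc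
  have hmid := fun j => @res_mid a b h ha hb j
  refine ⟨p, a + b - p, ?_, ⟨hp0, ?_⟩, ⟨by omega, ?_⟩, ?_⟩
  · exact (Nat.coprime_sub_self_right hpn.le).2 hpc
  · intro i hi
    rw [cw_length] at hi
    rw [cw_getD (by omega), cw_getD hi]
    have e := @res_add (a + b) b p (i + 1) h2 hpb
    have h3 := hmid (i + 1) (by omega) (by omega)
    have h4 := hmid (i + 1 + p) (by omega) (by omega)
    have h5 : i + p + 1 = i + 1 + p := by omega
    rw [h5, decide_eq_decide]
    split_ifs at e <;> omega
  · intro i hi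
    rw [cw_length] at hi
    rw [cw_getD (by omega), cw_getD hi]
    have e := @res_add (a + b) b p (i + 1 + (a + b - p)) h2 hpb
    have h3 := hmid (i + 1) (by omega) (by omega)
    have h4 := hmid (i + 1 + (a + b - p)) (by omega) (by omega)
    have h5 : i + (a + b - p) + 1 = i + 1 + (a + b - p) := by omega
    have h6 : i + 1 + (a + b - p) + p = i + 1 + (a + b) := by omega
    rw [h6, add_mul (i + 1), Nat.add_mul_mod_self_left] at e
    rw [h5, decide_eq_decide]
    split_ifs at e <;> omega
  · rw [cw_length]; omega

lemma const_seg (f : ℕ → Bool) (l u : ℕ) (h : ∀ r, l ≤ r → r + 1 < u → f r = f (r + 1)) :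
    ∀ r, l ≤ r → r < u → f r = f l := by
  intro r hr
  induction r, hr using Nat.le_induction with
  | base => intro _; rfl
  | succ r hr ih => intro hu; rw [← h r hr hu]; exact ih (by omega)

/-- A central word is determined by two letters. -/
lemma central_struct {C : List Bool} {p q : ℕ} (hpq : Nat.Coprime p q) (hp : HasPeriod C p)
    (hq : HasPeriod C q) (hl : C.length + 2 = p + q) :
    ∃ a b, a + b = p + q ∧ Nat.Coprime a b ∧ 0 < a ∧ 0 < b ∧ ∃ x y : Bool, ∀ i, i < C.length →
      C.getD i false = if a < (i + 1) * b % (a + b) then y else x := by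
  obtain ⟨hp0, hp⟩ := hp
  obtain ⟨hq0, hq⟩ := hq
  have hn : 2 ≤ p + q := by omega
  have hc : Nat.Coprime p (p + q) := by simpa using hpq
  obtain ⟨b, hb0, hbn, hbp, hbc⟩ := exists_inv hn hc
  obtain ⟨a, hab⟩ : ∃ a, a + b = p + q := ⟨p + q - b, by omega⟩
  have ha : 0 < a := by omega
  have hcab : Nat.Coprime a b := by
    rw [← hab] at hbc; simpa using hbc.symm
  refine ⟨a, b, hab, hcab, ha, hb0, ?_⟩
  have hmid := fun j => @res_mid a b hcab ha hb0 j
  have hlast := res_last ha hb0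
  rw [hab] at hlast hmid ⊢
  have hpb : p * b % (p + q) = 1 := by rw [mul_comm]; exact hbp
  -- round trip
  have rt1 : ∀ j, j < p + q → (j * b % (p + q)) * p % (p + q) = j := by
    intro j hj
    rw [Nat.mod_mul_mod, mul_assoc, ← Nat.mul_mod_mod, hbp, mul_one, Nat.mod_eq_of_lt hj]
  have rt2 : ∀ r, r < p + q → (r * p % (p + q)) * b % (p + q) = r := by
    intro j hj
    rw [Nat.mod_mul_mod, mul_assoc, ← Nat.mul_mod_mod, hpb, mul_one, Nat.mod_eq_of_lt hj]
  let f : ℕ → Bool := fun r => C.getD (r * p % (p + q) - 1) false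
  have hrange : ∀ r, 0 < r → r < p + q → r ≠ a →
      0 < r * p % (p + q) ∧ r * p % (p + q) < p + q - 1 := by
    intro r h0 h1 h2
    have h3 := rt2 r h1
    have h4 := Nat.mod_lt (r * p) (show 0 < p + q by omega)
    constructor
    · rcases Nat.eq_zero_or_pos (r * p % (p + q)) with h | h
      · rw [h] at h3; simp at h3; omega
      · exact h
    · by_contra h5
      have h6 : r * p % (p + q) = p + q - 1 := by omega
      rw [h6, hlast] at h3; omega
  have step : ∀ r, 0 < r → r + 1 < p + q → r ≠ a → r + 1 ≠ a → f r = f (r + 1) := by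
    intro r h0 h1 h2 h3
    have k1 := hrange r h0 (by omega) h2
    have k2 := hrange (r + 1) (by omega) h1 h3
    have k3 : (r + 1) * p % (p + q) = (r * p % (p + q) + p) % (p + q) := by
      rw [add_mul, one_mul, Nat.mod_add_mod]
    show C.getD (r * p % (p + q) - 1) false = C.getD ((r + 1) * p % (p + q) - 1) false
    set j := r * p % (p + q)
    by_cases hj : j + p < p + q
    · rw [Nat.mod_eq_of_lt hj] at k3
      have := hp (j - 1) (by omega)
      rw [k3, this]; congr 1; omega
    · have k4 : (j + p) % (p + q) = j - q := by
        have : j + p = (j - q) + (p + q) := by omega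
        rw [this, Nat.add_mod_right, Nat.mod_eq_of_lt (by omega)]
      rw [k4] at k3
      have := hq (j - q - 1) (by omega)
      rw [k3, this]; congr 1; omega
  refine ⟨f 1, f (a + 1), ?_⟩
  intro i hi
  have h1 := hmid (i + 1) (by omega) (by omega)
  have h2 := rt1 (i + 1) (by omega)
  have h3 := Nat.mod_lt ((i + 1) * b) (show 0 < p + q by omega)
  have h4 : C.getD i false = f ((i + 1) * b % (p + q)) := by
    show _ = C.getD (((i + 1) * b % (p + q)) * p % (p + q) - 1) false
    rw [h2, Nat.add_sub_cancel]
  rw [h4]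
  split_ifs with h
  · exact const_seg f (a + 1) (p + q) (fun r _ _ => step r (by omega) (by omega) (by omega)
      (by omega)) _ (by omega) h3
  · exact const_seg f 1 a (fun r _ _ => step r (by omega) (by omega) (by omega)
      (by omega)) _ (by omega) (by omega)

lemma eq_cw {C : List Bool} {a b : ℕ} (hl : C.length = a + b - 2)
    (h : ∀ i, i < C.length → C.getD i false = decide (a < (i + 1) * b % (a + b))) :
    C = cw a b := by
  apply List.ext_getElem
  · rw [cw_length, hl]
  · intro i h1 h2
    have e1 := h i h1
    have e2 := @cw_getD a b i (by omega)
    rw [← e2, List.getD_eq_getElem _ _ h1, List.getD_eq_getElem _ _ h2] at e1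
    exact e1

lemma res_swap {a b j : ℕ} (hb : 0 < a + b) (h0 : j * b % (a + b) ≠ 0) :
    j * a % (a + b) = a + b - j * b % (a + b) := by
  have h1 := Nat.div_add_mod (j * b) (a + b)
  have h2 := Nat.div_add_mod (j * a) (a + b)
  have h3 := Nat.mod_lt (j * b) hb
  have h4 := Nat.mod_lt (j * a) hb
  set r := j * b % (a + b)
  set s := j * a % (a + b)
  have hd : (a + b) ∣ (r + s) := by
    have : (a + b) ∣ (a + b) * (j * b / (a + b)) + (a + b) * (j * a / (a + b)) + (r + s) := by
      refine ⟨j, ?_⟩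
      linarith
    exact (Nat.dvd_add_right (Dvd.intro _ (by rw [mul_add]))).1 this
  obtain ⟨k, hk⟩ := hd
  have : k = 1 := by
    have : k < 2 := by
      by_contra hk2
      have : (a + b) * 2 ≤ (a + b) * k := Nat.mul_le_mul_left _ (by omega)
      omega
    have : k ≠ 0 := by rintro rfl; omega
    omega
  subst this
  omega

lemma central_cw {C : List Bool} (h : IsCentral C) :
    ∃ a b, Nat.Coprime a b ∧ 2 ≤ a + b ∧ C = cw a b := by
  obtain ⟨p, q, hpq, hp, hq, hl⟩ := h
  obtain ⟨a, b, hab, hc, ha, hb, x, y, hxy⟩ := central_struct hpq hp hq hl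
  cases x <;> cases y
  · refine ⟨C.length + 1, 1, by simp, by omega, eq_cw (by omega) ?_⟩
    intro i hi
    have e : (i + 1) * 1 % (C.length + 1 + 1) = i + 1 := by
      rw [mul_one, Nat.mod_eq_of_lt (by omega)]
    rw [hxy i hi, e]
    simp; omega
  · refine ⟨a, b, hc, by omega, eq_cw (by omega) ?_⟩
    intro i hi
    rw [hxy i hi]
    split_ifs with h <;> simp [h]
  · refine ⟨b, a, hc.symm, by omega, eq_cw (by omega) ?_⟩
    intro i hi
    have h1 := res_mid hc ha hb (j := i + 1) (by omega) (by omega)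
    have h2 := res_swap (by omega) h1.1
    have h3 := Nat.mod_lt ((i + 1) * b) (show 0 < a + b by omega)
    rw [hxy i hi, add_comm b a, h2]
    split_ifs with h <;> simp <;> omega
  · refine ⟨1, C.length + 1, by simp, by omega, eq_cw (by omega) ?_⟩
    intro i hi
    have h1 := res_mid (a := 1) (b := C.length + 1) (by simp) (by omega) (by omega)
      (j := i + 1) (by omega) (by omega)
    rw [hxy i hi]
    simp; omega

lemma stmt_aux (F : ℕ → ℕ → List Bool) (u v : Bool)
    (hF : ∀ a b, Nat.Coprime a b → 2 ≤ a + b → F a b = u :: cw a b ++ [v])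
    (h10 : F 1 0 = [false]) (h01 : F 0 1 = [true]) (w : List Bool) :
    (∃ a b : ℕ, Nat.Coprime a b ∧ w = F a b) ↔
      (w.length = 1 ∨ ∃ C : List Bool, IsCentral C ∧ w = u :: C ++ [v]) := by
  constructor
  · rintro ⟨a, b, hc, rfl⟩
    by_cases h2 : 2 ≤ a + b
    · exact Or.inr ⟨cw a b, cw_central hc h2, hF a b hc h2⟩
    · left
      have : (a = 0 ∧ b = 0) ∨ (a = 1 ∧ b = 0) ∨ (a = 0 ∧ b = 1) := by omega
      rcases this with ⟨rfl, rfl⟩ | ⟨rfl, rfl⟩ | ⟨rfl, rfl⟩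
      · simp at hc
      · simp [h10]
      · simp [h01]
  · rintro (h | ⟨C, hC, rfl⟩)
    · obtain ⟨x, rfl⟩ := List.length_eq_one_iff.1 h
      cases x
      · exact ⟨1, 0, by simp, h10.symm⟩
      · exact ⟨0, 1, by simp, h01.symm⟩
    · obtain ⟨a, b, hc, h2, rfl⟩ := central_cw hC
      exact ⟨a, b, hc, (hF a b hc h2).symm⟩

/-- A binary word is a primitive lower (resp. upper) Christoffel word iff
it has length 1 or has the form `0·C·1` (resp. `1·C·0`) for a central word `C`. -/
theorem stmt2 (w : List Bool) :
    ((∃ a b : ℕ, Nat.Coprime a b ∧ w = lowerChristoffel a b) ↔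
      (w.length = 1 ∨ ∃ C : List Bool, IsCentral C ∧ w = false :: C ++ [true])) ∧
    ((∃ a b : ℕ, Nat.Coprime a b ∧ w = upperChristoffel a b) ↔
      (w.length = 1 ∨ ∃ C : List Bool, IsCentral C ∧ w = true :: C ++ [false])) := by
  exact ⟨stmt_aux lowerChristoffel false true (fun a b => lower_eq) (by decide) (by decide) w,
    stmt_aux upperChristoffel true false (fun a b => upper_eq) (by decide) (by decide) w⟩
end

section
/- Let a, b be coprime positive integers and n = a + b, and write the lower Christoffel word w_{a,b} = 0·C·1 (C is the word obtained from w_{a,b} by removing its first and last letters). Then C has periods a' and b', where a' (respectively b') is the unique integer with 1 ≤ a' ≤ n−1 and a·a' ≡ 1 (mod n) (respectively 1 ≤ b' ≤ n−1 and b·b' ≡ 1 (mod n)). -/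
lemma letter_iff (a b x : ℕ) (ha : 0 < a) :
    ((x + 1) * b / (a + b) ≠ x * b / (a + b)) ↔ a ≤ x * b % (a + b) := by
  have hn : 0 < a + b := by omega
  have h1 := Nat.div_add_mod (x * b) (a + b)
  have h2 := Nat.mod_lt (x * b) hn
  set q := x * b / (a + b)
  set r := x * b % (a + b)
  have h3 : (x + 1) * b = (r + b) + (a + b) * q := by rw [add_mul, ← h1]; ring
  rw [h3, Nat.add_mul_div_left _ _ hn]
  by_cases h : a ≤ r
  · have : 0 < (r + b) / (a + b) := Nat.div_pos (by omega) hn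
    constructor <;> intro _ <;> omega
  · have : (r + b) / (a + b) = 0 := Nat.div_eq_of_lt (by omega)
    constructor <;> intro _ <;> omega

lemma letter_shift (a b x y : ℕ) (ha : 0 < a) (hab : Nat.Coprime a b)
    (hy : 1 ≤ y) (hy' : y + 1 < a + b)
    (h : (x * b + 1) % (a + b) = y * b % (a + b)) :
    ((x + 1) * b / (a + b) ≠ x * b / (a + b)) ↔ ((y + 1) * b / (a + b) ≠ y * b / (a + b)) := by
  have hn : 0 < a + b := by omega
  have hc : Nat.Coprime (a + b) b := by simpa using hab
  rw [letter_iff a b x ha, letter_iff a b y ha]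
  have h0 : y * b % (a + b) ≠ 0 := fun h0 => by
    have := Nat.le_of_dvd (by omega) (hc.dvd_of_dvd_mul_right (Nat.dvd_of_mod_eq_zero h0))
    omega
  have h1 : y * b % (a + b) ≠ a := fun h1 => by
    have h2 : (a + b) ∣ (y + 1) * b := by
      refine ⟨y * b / (a + b) + 1, ?_⟩
      have := Nat.div_add_mod (y * b) (a + b)
      rw [h1] at this
      linarith
    have := Nat.le_of_dvd (by omega) (hc.dvd_of_dvd_mul_right h2)
    omega
  have h2 := Nat.mod_lt (x * b) hn
  rw [← Nat.mod_add_mod] at h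
  rcases Nat.lt_or_ge (x * b % (a + b) + 1) (a + b) with h3 | h3
  · rw [Nat.mod_eq_of_lt h3] at h
    omega
  · have h4 : x * b % (a + b) + 1 = a + b := by omega
    rw [h4, Nat.mod_self] at h
    omega

lemma core_getD (a b i : ℕ) (hi : i + 2 < a + b) :
    ((lowerChristoffel a b).tail.dropLast).getD i false =
      decide ((i + 1 + 1) * b / (a + b) ≠ (i + 1) * b / (a + b)) := by
  rw [List.getD_eq_getElem _ _ (by simp [lowerChristoffel]; omega)]
  simp [lowerChristoffel]

/-- If `w_{a,b} = 0·C·1` with `a, b` coprime positive integers and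
`n = a + b`, then `C` has periods `a'` and `b'`, the multiplicative inverses of `a` and `b`
modulo `n`. -/
theorem stmt3 (a b a' b' : ℕ) (ha : 0 < a) (hb : 0 < b) (hab : Nat.Coprime a b)
    (ha' : 1 ≤ a' ∧ a' ≤ a + b - 1 ∧ a * a' % (a + b) = 1)
    (hb' : 1 ≤ b' ∧ b' ≤ a + b - 1 ∧ b * b' % (a + b) = 1) :
    HasPeriod ((lowerChristoffel a b).tail.dropLast) a' ∧
    HasPeriod ((lowerChristoffel a b).tail.dropLast) b' := by
  obtain ⟨ha1, ha2, ha3⟩ := ha'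
  obtain ⟨hb1, hb2, hb3⟩ := hb'
  refine ⟨⟨ha1, fun i hi => ?_⟩, ⟨hb1, fun i hi => ?_⟩⟩
  · have hi' : i + a' + 2 < a + b := by simp [lowerChristoffel] at hi; omega
    rw [core_getD _ _ _ (by omega), core_getD _ _ _ hi', decide_eq_decide]
    refine (letter_shift a b (i + a' + 1) (i + 1) ha hab (by omega) (by omega) ?_).symm
    have e := Nat.div_add_mod (a * a') (a + b)
    rw [ha3] at e
    have h : (i + a' + 1) * b + 1 + (a + b) * (a * a' / (a + b))
        = (i + 1) * b + (a + b) * a' := by linarith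
    rw [← Nat.add_mul_mod_self_left _ (a + b) (a * a' / (a + b)), h, Nat.add_mul_mod_self_left]
  · have hi' : i + b' + 2 < a + b := by simp [lowerChristoffel] at hi; omega
    rw [core_getD _ _ _ (by omega), core_getD _ _ _ hi', decide_eq_decide]
    refine letter_shift a b (i + 1) (i + b' + 1) ha hab (by omega) (by omega) ?_
    have e := Nat.div_add_mod (b * b') (a + b)
    rw [hb3] at e
    have h : (i + b' + 1) * b
        = (i + 1) * b + 1 + (a + b) * (b * b' / (a + b)) := by linarith
    rw [h, Nat.add_mul_mod_self_left]
end

section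
/- A binary word w is a primitive Christoffel word (i.e., w = w_{a,b} or w = W_{a,b} for some coprime nonnegative integers a, b not both zero) if and only if w is balanced and unbordered. -/
/-- A word is unbordered if no nonempty proper prefix of it is also a suffix. -/
def Unbordered (w : List Bool) : Prop :=
  ∀ u : List Bool, u ≠ [] → u ≠ w → u <+: w → u <:+ w → False

/-- number of ones in the prefix of length `k` -/
def pc (w : List Bool) (k : ℕ) : ℤ := ((w.take k).count true : ℤ)

lemma pc_zero (w : List Bool) : pc w 0 = 0 := by simp [pc]

lemma pc_succ (w : List Bool) (k : ℕ) (hk : k < w.length) :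
    pc w (k + 1) = pc w k + if w[k] = true then 1 else 0 := by
  unfold pc
  rw [List.take_succ_eq_append_getElem hk, List.count_append]
  cases h : w[k] <;> simp

lemma pc_factor (w : List Bool) (i L : ℕ) :
    (((w.drop i).take L).count true : ℤ) = pc w (i + L) - pc w i := by
  unfold pc
  rw [List.take_add, List.count_append]
  push_cast; ring

lemma balanced_iff (w : List Bool) : BalancedWord w ↔
    ∀ i j L : ℕ, i + L ≤ w.length → j + L ≤ w.length →
      |(pc w (i + L) - pc w i) - (pc w (j + L) - pc w j)| ≤ 1 := by
  constructor
  · intro h i j L hi hj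
    have := h ((w.drop i).take L) ((w.drop j).take L)
      ((List.take_prefix _ _).isInfix.trans (List.drop_suffix _ _).isInfix)
      ((List.take_prefix _ _).isInfix.trans (List.drop_suffix _ _).isInfix)
      (by simp; omega)
    rwa [pc_factor, pc_factor] at this
  · rintro h u v ⟨p, s, hu⟩ ⟨p', s', hv⟩ huv
    have e1 : u = (w.drop p.length).take u.length := by rw [← hu]; simp
    have e2 : v = (w.drop p'.length).take u.length := by rw [← hv, huv]; simp
    have l1 := congrArg List.length hu
    have l2 := congrArg List.length hv
    simp only [List.length_append] at l1 l2
    have := h p.length p'.length u.length (by omega) (by omega)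
    rw [← pc_factor, ← pc_factor, ← e1, ← e2] at this
    exact this

lemma unbordered_iff (w : List Bool) : Unbordered w ↔
    ∀ L : ℕ, 0 < L → L < w.length → w.take L ≠ w.drop (w.length - L) := by
  constructor
  · intro h L h0 hL he
    refine h (w.take L) ?_ ?_ (List.take_prefix _ _) (he ▸ List.drop_suffix _ _)
    · intro h'
      have := congrArg List.length h'
      rw [List.length_take] at this
      simp only [List.length_nil] at this
      omega
    · intro h'
      have := congrArg List.length h'
      rw [List.length_take] at this
      omega
  · intro h u hu huw hp hs
    have hl : u.length ≤ w.length := hp.length_le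
    have hl2 : u.length ≠ w.length := fun e => huw (hp.eq_of_length e)
    apply h u.length (List.length_pos_of_ne_nil hu) (by omega)
    rw [← List.prefix_iff_eq_take.mp hp, ← List.suffix_iff_eq_drop.mp hs]

/-- equality of all partial counts gives a border -/
lemma eq_of_pc (u v : List Bool) (hl : u.length = v.length)
    (h : ∀ i ≤ u.length, pc u i = pc v i) : u = v := by
  apply List.ext_getElem hl
  intro i h1 h2
  have a1 := pc_succ u i h1
  have a2 := pc_succ v i h2
  rw [h (i + 1) (by omega), h i (by omega), a2] at a1
  cases hu : u[i] <;> cases hv : v[i] <;> simp [hu, hv] at a1 <;> rfl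

lemma pc_map (n : ℕ) (g : ℕ → ℕ) (h0 : g 0 = 0)
    (hs : ∀ i, g i ≤ g (i + 1) ∧ g (i + 1) ≤ g i + 1) (k : ℕ) (hk : k ≤ n) :
    pc ((List.range n).map fun i => decide (g (i + 1) ≠ g i)) k = g k := by
  induction k with
  | zero => simp [pc_zero, h0]
  | succ k ih =>
    rw [pc_succ _ _ (by simp; omega), ih (by omega)]
    have := hs k
    by_cases hg : g (k + 1) = g k
    · simp [hg]
    · simp [hg]; omega

lemma combi (n : ℕ) (S : ℕ → ℤ) (h0 : S 0 = 0) (h1 : S 1 = 0) (hn : 2 ≤ n)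
    (hl : S n - S (n - 1) = 1)
    (hb : ∀ i j L : ℕ, i + L ≤ n → j + L ≤ n → |(S (i + L) - S i) - (S (j + L) - S j)| ≤ 1)
    (hu : ∀ L, 0 < L → L < n → ∃ i ≤ L, S i ≠ S (n - L + i) - S (n - L)) :
    ∀ L, 0 < L → L < n → S L + S (n - L) = S n - 1 := by
  intro L
  induction L using Nat.strong_induction_on with
  | _ L ih =>
    intro hL0 hLn
    by_cases hL1 : L = 1
    · subst hL1; omega
    have hb' : ∀ i i' j j' : ℕ, i ≤ i' → i' ≤ n → j' ≤ n → i' + j = j' + i →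
        -1 ≤ (S i' - S i) - (S j' - S j) ∧ (S i' - S i) - (S j' - S j) ≤ 1 := by
      intro i i' j j' a1 a2 a3 a4
      have := abs_le.mp (hb i j (i' - i) (by omega) (by omega))
      rwa [show i + (i' - i) = i' by omega, show j + (i' - i) = j' by omega] at this
    have B := hb' 0 L (n - L) n (by omega) (by omega) (by omega) (by omega)
    have key : ∀ i, 0 < i → i < L → S L ≤ S i + S (L - i) + 1 ∧
        S i + S (L - i) + 1 ≤ S n - S (n - L) ∧ S n - S (n - L + i) = S (L - i) + 1 := by
      intro i hi hiL
      have a1 := hb' i L 0 (L - i) (by omega) (by omega) (by omega) (by omega)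
      have a2 := hb' (n - L) (n - i) (n - L + i) n (by omega) (by omega) (by omega) (by omega)
      have a3 := ih i hiL hi (by omega)
      have a4 := ih (L - i) (by omega) (by omega) (by omega)
      rw [show n - (L - i) = n - L + i by omega] at a4
      refine ⟨by omega, by omega, by omega⟩
    have k1 := key 1 (by omega) (by omega)
    by_contra hne
    obtain ⟨i, hiL, hi⟩ := hu L hL0 hLn
    apply hi
    rcases Nat.eq_zero_or_pos i with rfl | hp
    · simp [h0]
    rcases Nat.lt_or_ge i L with hlt | hge
    · have := key i hp hlt
      omega
    · obtain rfl : i = L := by omega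
      rw [show n - i + i = n by omega]
      omega

lemma combi2 (n : ℕ) (S : ℕ → ℤ) (h0 : S 0 = 0) (h1 : S 1 = 0) (hn : 2 ≤ n)
    (hl : S n - S (n - 1) = 1)
    (hb : ∀ i j L : ℕ, i + L ≤ n → j + L ≤ n → |(S (i + L) - S i) - (S (j + L) - S j)| ≤ 1)
    (hu : ∀ L, 0 < L → L < n → ∃ i ≤ L, S i ≠ S (n - L + i) - S (n - L)) :
    ∀ k, k ≤ n → (n : ℤ) * S k ≤ k * S n ∧ (k : ℤ) * S n < n * S k + n := by
  have hc := combi n S h0 h1 hn hl hb hu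
  have hadd : ∀ i j, 0 < i → 0 < j → i + j < n →
      S i + S j ≤ S (i + j) ∧ S (i + j) ≤ S i + S j + 1 := by
    intro i j hi hj hij
    have a1 := abs_le.mp (hb i 0 j (by omega) (by omega))
    have a2 := abs_le.mp (hb i (n - j) j (by omega) (by omega))
    rw [show n - j + j = n by omega] at a2
    simp only [zero_add] at a1
    have := hc j hj (by omega)
    constructor <;> omega
  intro k hk
  rcases Nat.eq_or_lt_of_le hk with rfl | hk
  · constructor
    · exact le_refl _
    · have : (0 : ℤ) < k := by omega
      linarith
  rcases Nat.eq_zero_or_pos k with rfl | hk0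
  · simp [h0]; omega
  -- induction
  have main : ∀ m : ℕ, ∃ (q r : ℕ), r < n ∧ (m + 1) * k = n * q + r ∧
      (m + 1 : ℤ) * S k ≤ S r + q * S n ∧ S r + q * S n ≤ (m + 1) * S k + m := by
    intro m
    induction m with
    | zero => exact ⟨0, k, hk, by simp, by simp, by simp⟩
    | succ m ih =>
      obtain ⟨q, r, hr, he, h2, h3⟩ := ih
      rcases Nat.lt_or_ge (r + k) n with hlt | hge
      · refine ⟨q, r + k, hlt, by linarith, ?_⟩
        have : S r + S k ≤ S (r + k) ∧ S (r + k) ≤ S r + S k + 1 := by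
          rcases Nat.eq_zero_or_pos r with rfl | hr0
          · simp [h0]
          · exact hadd r k hr0 hk0 hlt
        push_cast
        constructor <;> linarith
      · refine ⟨q + 1, r + k - n, by omega, ?_, ?_⟩
        · have : r + k - n + n = r + k := by omega
          linarith
        have : S r + S k ≤ S (r + k - n) + S n ∧ S (r + k - n) + S n ≤ S r + S k + 1 := by
          have c1 := hc r (by omega) hr
          have c2 := hc k hk0 hk
          rcases Nat.eq_or_lt_of_le hge with heq | hgt
          · rw [show r + k - n = 0 by omega, h0]
            rw [show n - k = r by omega] at c2
            omega
          · have c3 := hc (r + k - n) (by omega) (by omega)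
            have := hadd (n - r) (n - k) (by omega) (by omega) (by omega)
            rw [show n - r + (n - k) = n - (r + k - n) by omega] at this
            omega
        push_cast
        constructor <;> linarith
  obtain ⟨q, r, hr, he, h2, h3⟩ := main (n - 1)
  rw [show n - 1 + 1 = n by omega] at he
  have hr0 : r = 0 := by
    have : n ∣ n * q + r := he ▸ Dvd.intro k rfl
    have : n ∣ r := (Nat.dvd_add_right (Dvd.intro q rfl)).mp this
    exact Nat.eq_zero_of_dvd_of_lt this hr
  subst hr0
  have hq : q = k := by
    have : n * k = n * q := by simpa using he
    exact (Nat.eq_of_mul_eq_mul_left (by omega) this).symm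
  subst hq
  rw [h0] at h2 h3
  have hcast : ((n - 1 : ℕ) : ℤ) = n - 1 := by push_cast [show 1 ≤ n by omega]; ring
  rw [hcast] at h2 h3
  constructor <;> linarith

lemma combi_gcd (n : ℕ) (S : ℕ → ℤ) (b : ℕ) (hb : S n = b) (hn : 2 ≤ n)
    (hc : ∀ L, 0 < L → L < n → S L + S (n - L) = S n - 1)
    (hf : ∀ k, k ≤ n → (n : ℤ) * S k ≤ k * S n ∧ (k : ℤ) * S n < n * S k + n) :
    Nat.Coprime n b := by
  by_contra hg
  obtain ⟨p, hp, ⟨x, hx⟩, ⟨y, hy⟩⟩ := Nat.Prime.not_coprime_iff_dvd.mp hg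
  have hp2 := hp.two_le
  have hx0 : 0 < x := by
    rcases Nat.eq_zero_or_pos x with rfl | h
    · simp at hx; omega
    · exact h
  have hxn : x < n := by nlinarith
  have key : ∀ k : ℕ, k ≤ n → ∀ c : ℤ, (k : ℤ) * S n = n * c → S k = c := by
    intro k hk c hc
    have := hf k hk
    rw [hc] at this
    have hn0 : (0 : ℤ) < n := by omega
    have t1 : S k ≤ c := le_of_mul_le_mul_left this.1 hn0
    have t2 : c < S k + 1 := by
      apply lt_of_mul_lt_mul_left (a := (n : ℤ)) _ hn0.le
      linarith [this.2]
    omega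
  have e1 := key x hxn.le y (by rw [hb, hx, hy]; push_cast; ring)
  have e2 := key (n - x) (by omega) (b - y) (by
    rw [hb]; push_cast [hxn.le]; rw [hx, hy]; push_cast; ring)
  have := hc x hx0 hxn
  omega

/-- From floor-type estimates to balanced and unbordered. -/
lemma forward (w : List Bool) (b : ℕ) (hcop : Nat.Coprime w.length b)
    (H : (∀ k ≤ w.length, 0 ≤ (w.length : ℤ) * pc w k - k * b ∧
          (w.length : ℤ) * pc w k - k * b < w.length) ∨
      (∀ k ≤ w.length, -(w.length : ℤ) < (w.length : ℤ) * pc w k - k * b ∧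
          (w.length : ℤ) * pc w k - k * b ≤ 0)) :
    BalancedWord w ∧ Unbordered w := by
  constructor
  · rw [balanced_iff]
    intro i j L hi hj
    rcases Nat.eq_zero_or_pos w.length with h | h
    · obtain rfl : i = 0 := by omega
      obtain rfl : j = 0 := by omega
      simp
    have hn : (0 : ℤ) < w.length := by omega
    have lt2 : ∀ c : ℤ, (w.length : ℤ) * c < w.length * 2 → c ≤ 1 := fun c hc => by
      have := lt_of_mul_lt_mul_left hc hn.le
      omega
    rw [abs_le]
    rcases H with H | H <;>
    · have x1 := H i (by omega)
      have x2 := H j (by omega)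
      have x3 := H (i + L) hi
      have x4 := H (j + L) hj
      push_cast at x3 x4
      constructor
      · rw [neg_le]
        apply lt2
        linarith
      · apply lt2
        linarith
  · rw [unbordered_iff]
    intro L h0 hL he
    have hn : (0 : ℤ) < w.length := by omega
    have e1 : pc w L = pc w w.length - pc w (w.length - L) := by
      have := pc_factor w (w.length - L) L
      rw [show w.length - L + L = w.length by omega, ← he] at this
      rw [← this, List.take_take, min_self, pc]
    have hz : (w.length : ℤ) * pc w L = L * b := by
      have c1 : ((w.length - L : ℕ) : ℤ) = w.length - L := by push_cast [hL.le]; ring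
      have e2 : (w.length : ℤ) * pc w L = w.length * pc w w.length - w.length * pc w (w.length - L) := by
        rw [e1]; ring
      rcases H with H | H
      · have x1 := H L hL.le
        have x2 := H (w.length - L) (by omega)
        have x3 := H w.length le_rfl
        rw [c1] at x2
        have : pc w w.length - b < 1 := by
          apply lt_of_mul_lt_mul_left (a := (w.length : ℤ)) _ hn.le; linarith
        have : (w.length : ℤ) * pc w w.length ≤ w.length * b :=
          mul_le_mul_of_nonneg_left (by omega) hn.le
        linarith
      · have x1 := H L hL.le
        have x2 := H (w.length - L) (by omega)
        have x3 := H w.length le_rfl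
        rw [c1] at x2
        have : b - pc w w.length < 1 := by
          apply lt_of_mul_lt_mul_left (a := (w.length : ℤ)) _ hn.le; linarith
        have : (w.length : ℤ) * b ≤ w.length * pc w w.length :=
          mul_le_mul_of_nonneg_left (by omega) hn.le
        linarith
    have hd : w.length ∣ L * b := by
      have : (w.length : ℤ) ∣ ((L * b : ℕ) : ℤ) := ⟨pc w L, by push_cast; exact hz.symm⟩
      exact_mod_cast this
    have := Nat.le_of_dvd h0 (hcop.dvd_of_dvd_mul_right hd)
    omega

lemma lower_step (n b : ℕ) (hn : 0 < n) (hb : b ≤ n) (i : ℕ) :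
    i * b / n ≤ (i + 1) * b / n ∧ (i + 1) * b / n ≤ i * b / n + 1 := by
  constructor
  · exact Nat.div_le_div_right (by nlinarith)
  · rw [← Nat.add_div_right _ hn]
    exact Nat.div_le_div_right (by nlinarith)

lemma upper_step (n b : ℕ) (hn : 0 < n) (hb : b ≤ n) (i : ℕ) :
    (i * b + n - 1) / n ≤ ((i + 1) * b + n - 1) / n ∧
      ((i + 1) * b + n - 1) / n ≤ (i * b + n - 1) / n + 1 := by
  have e : (i + 1) * b = i * b + b := by ring
  rw [e]
  constructor
  · exact Nat.div_le_div_right (by omega)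
  · rw [← Nat.add_div_right _ hn]
    exact Nat.div_le_div_right (by omega)

lemma floor_bd (n x : ℕ) (hn : 0 < n) : (n : ℤ) * (x / n : ℕ) ≤ x ∧ (x : ℤ) < n * (x / n : ℕ) + n := by
  have h1 := Nat.div_add_mod x n
  have h2 := Nat.mod_lt x hn
  have h3 : (x : ℤ) = n * (x / n : ℕ) + (x % n : ℕ) := by exact_mod_cast h1.symm
  constructor <;> omega

lemma eq_of_floor (n : ℕ) (hn : 0 < n) (x : ℤ) (s t : ℤ) (h1 : n * s ≤ x) (h2 : x < n * s + n)
    (h3 : n * t ≤ x) (h4 : x < n * t + n) : s = t := by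
  have hn0 : (0 : ℤ) < n := by omega
  have t1 : s < t + 1 := by
    apply lt_of_mul_lt_mul_left (a := (n : ℤ)) _ hn0.le; linarith
  have t2 : t < s + 1 := by
    apply lt_of_mul_lt_mul_left (a := (n : ℤ)) _ hn0.le; linarith
  omega

lemma pc_lower (a b : ℕ) (hn : 0 < a + b) (k : ℕ) (hk : k ≤ a + b) :
    pc (lowerChristoffel a b) k = (k * b / (a + b) : ℕ) :=
  pc_map (a + b) (fun i => i * b / (a + b)) (by simp)
    (fun i => lower_step (a + b) b hn (by omega) i) k hk

lemma pc_upper (a b : ℕ) (hn : 0 < a + b) (k : ℕ) (hk : k ≤ a + b) :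
    pc (upperChristoffel a b) k = ((k * b + (a + b) - 1) / (a + b) : ℕ) :=
  pc_map (a + b) (fun i => (i * b + (a + b) - 1) / (a + b))
    (by simp; omega)
    (fun i => upper_step (a + b) b hn (by omega) i) k hk

lemma len_lower (a b : ℕ) : (lowerChristoffel a b).length = a + b := by simp [lowerChristoffel]
lemma len_upper (a b : ℕ) : (upperChristoffel a b).length = a + b := by simp [upperChristoffel]

lemma forward_lower (a b : ℕ) (h : Nat.Coprime a b) :
    BalancedWord (lowerChristoffel a b) ∧ Unbordered (lowerChristoffel a b) := by
  have hn : 0 < a + b := by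
    rcases Nat.eq_zero_or_pos (a + b) with h' | h'
    · obtain ⟨rfl, rfl⟩ : a = 0 ∧ b = 0 := by omega
      simp at h
    · exact h'
  apply forward _ b (by rw [len_lower]; simpa using h)
  right
  rw [len_lower]
  intro k hk
  rw [pc_lower a b hn k hk]
  have := floor_bd (a + b) (k * b) hn
  rw [Nat.cast_mul k b] at this
  constructor <;> linarith

lemma upper_bd (n x : ℕ) (hn : 0 < n) : (x : ℤ) ≤ n * ((x + n - 1) / n : ℕ) ∧
    (n : ℤ) * ((x + n - 1) / n : ℕ) < x + n := by
  have := floor_bd n (x + n - 1) hn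
  have e : ((x + n - 1 : ℕ) : ℤ) = x + n - 1 := by omega
  rw [e] at this
  constructor <;> linarith

lemma forward_upper (a b : ℕ) (h : Nat.Coprime a b) :
    BalancedWord (upperChristoffel a b) ∧ Unbordered (upperChristoffel a b) := by
  have hn : 0 < a + b := by
    rcases Nat.eq_zero_or_pos (a + b) with h' | h'
    · obtain ⟨rfl, rfl⟩ : a = 0 ∧ b = 0 := by omega
      simp at h
    · exact h'
  apply forward _ b (by rw [len_upper]; simpa using h)
  left
  rw [len_upper]
  intro k hk
  rw [pc_upper a b hn k hk]
  have := upper_bd (a + b) (k * b) hn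
  rw [Nat.cast_mul k b] at this
  constructor <;> linarith

lemma unb_pc (w : List Bool) (h : Unbordered w) (L : ℕ) (h0 : 0 < L) (hL : L < w.length) :
    ∃ i ≤ L, pc w i ≠ pc w (w.length - L + i) - pc w (w.length - L) := by
  by_contra hcon
  push Not at hcon
  apply (unbordered_iff w).mp h L h0 hL
  apply eq_of_pc
  · simp; omega
  · intro i hi
    have hi' : i ≤ L := by simp at hi; omega
    have := pc_factor w (w.length - L) i
    rw [← hcon i hi'] at this
    rw [pc, pc, List.take_take, min_eq_left hi', this, pc]

lemma backward (w : List Bool) (hw : w ≠ []) (hb : BalancedWord w) (hu : Unbordered w) :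
    IsPrimitiveChristoffel w := by
  have hlen := List.length_pos_of_ne_nil hw
  by_cases h1 : w.length = 1
  · obtain ⟨x, rfl⟩ := List.length_eq_one_iff.mp h1
    cases x
    · exact ⟨1, 0, by decide, Or.inl (by decide)⟩
    · exact ⟨0, 1, by decide, Or.inl (by decide)⟩
  have hn : 2 ≤ w.length := by omega
  obtain ⟨b, hbn⟩ : ∃ b : ℕ, pc w w.length = b := ⟨_, rfl⟩
  have hble : b ≤ w.length := by
    have : b = w.count true := by simpa [pc] using hbn.symm
    rw [this]; exact List.count_le_length
  have BB := (balanced_iff w).mp hb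
  have UU := unb_pc w hu
  have s0 := pc_succ w 0 hlen
  have s1 := pc_succ w (w.length - 1) (by omega)
  rw [show w.length - 1 + 1 = w.length by omega] at s1
  rw [zero_add, pc_zero, zero_add] at s0
  have hne : pc w 1 ≠ pc w w.length - pc w (w.length - 1) := by
    obtain ⟨i, hi, hh⟩ := UU 1 (by omega) (by omega)
    rcases Nat.eq_zero_or_pos i with rfl | hp
    · simp [pc_zero] at hh
    · obtain rfl : i = 1 := by omega
      rwa [show w.length - 1 + 1 = w.length by omega] at hh
  refine ⟨w.length - b, b, ?_⟩
  have hab : w.length - b + b = w.length := by omega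
  by_cases hw0 : w[0] = true
  · have hpc1 : pc w 1 = 1 := by simpa [hw0] using s0
    have hl : pc w w.length - pc w (w.length - 1) = 0 := by
      split_ifs at s1 <;> omega
    have U' : ∀ L, 0 < L → L < w.length → ∃ i ≤ L, (fun k : ℕ => (k : ℤ) - pc w k) i ≠
        (fun k : ℕ => (k : ℤ) - pc w k) (w.length - L + i) -
          (fun k : ℕ => (k : ℤ) - pc w k) (w.length - L) := by
      intro L a1 a2
      obtain ⟨i, hi, hh⟩ := UU L a1 a2
      refine ⟨i, hi, fun h' => hh ?_⟩
      simp only at h'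
      push_cast at h'
      linarith
    have B' : ∀ i j L : ℕ, i + L ≤ w.length → j + L ≤ w.length →
        |((fun k : ℕ => (k : ℤ) - pc w k) (i + L) - (fun k : ℕ => (k : ℤ) - pc w k) i) -
          ((fun k : ℕ => (k : ℤ) - pc w k) (j + L) - (fun k : ℕ => (k : ℤ) - pc w k) j)| ≤ 1 := by
      intro i j L hi hj
      have := BB i j L hi hj
      rw [abs_sub_comm] at this
      convert this using 2
      push_cast
      ring
    have z0 : (fun k : ℕ => (k : ℤ) - pc w k) 0 = 0 := by simp [pc_zero]
    have z1 : (fun k : ℕ => (k : ℤ) - pc w k) 1 = 0 := by simp [hpc1]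
    have zl : (fun k : ℕ => (k : ℤ) - pc w k) w.length -
        (fun k : ℕ => (k : ℤ) - pc w k) (w.length - 1) = 1 := by
      simp only
      omega
    have C1 := combi w.length (fun k : ℕ => (k : ℤ) - pc w k) z0 z1 hn zl B' U'
    have C2 := combi2 w.length (fun k : ℕ => (k : ℤ) - pc w k) z0 z1 hn zl B' U'
    have zn : (fun k : ℕ => (k : ℤ) - pc w k) w.length = (w.length - b : ℕ) := by
      simp only; omega
    have G := combi_gcd w.length (fun k : ℕ => (k : ℤ) - pc w k) _ zn hn C1 C2
    constructor
    · have : Nat.Coprime (w.length - b + b) (w.length - b) := by rwa [hab]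
      simpa [Nat.coprime_comm] using this
    · right
      apply eq_of_pc
      · rw [len_upper, hab]
      · intro k hk
        rw [pc_upper _ _ (by omega) k (by omega), hab]
        have c := C2 k hk
        have u := upper_bd w.length (k * b) (by omega)
        simp only [hbn] at c
        rw [Nat.cast_mul k b] at u
        have := eq_of_floor w.length (by omega) (-((k : ℤ) * b)) (-pc w k)
          (-((k * b + w.length - 1) / w.length : ℕ)) (by linarith) (by linarith)
          (by linarith) (by linarith)
        linarith
  · have hpc1 : pc w 1 = 0 := by simpa [hw0] using s0
    have hl : pc w w.length - pc w (w.length - 1) = 1 := by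
      split_ifs at s1 <;> omega
    have C1 := combi _ _ (pc_zero w) hpc1 hn hl BB UU
    have C2 := combi2 _ _ (pc_zero w) hpc1 hn hl BB UU
    have G := combi_gcd _ _ _ hbn hn C1 C2
    constructor
    · have : Nat.Coprime (w.length - b + b) b := by rwa [hab]
      simpa using this
    · left
      apply eq_of_pc
      · rw [len_lower, hab]
      · intro k hk
        rw [pc_lower _ _ (by omega) k (by omega), hab]
        have c := C2 k hk
        have u := floor_bd w.length (k * b) (by omega)
        rw [hbn] at c
        rw [Nat.cast_mul k b] at u
        exact eq_of_floor w.length (by omega) ((k : ℤ) * b) _ _ c.1 c.2 u.1 u.2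

/-- A (nonempty) binary word is a primitive Christoffel word iff it is
balanced and unbordered. -/
theorem stmt4 (w : List Bool) (hw : w ≠ []) :
    IsPrimitiveChristoffel w ↔ (BalancedWord w ∧ Unbordered w) := by
  constructor
  · rintro ⟨a, b, h, rfl | rfl⟩
    · exact forward_lower a b h
    · exact forward_upper a b h
  · rintro ⟨h1, h2⟩
    exact backward w hw h1 h2
end

section
/- Let a, b be coprime positive integers. Then the lower Christoffel word w_{a,b} is a Lyndon word, and every Lyndon word u with Parikh vector (a,b) satisfies u ≤ w_{a,b} in the lexicographic order induced by 0 < 1. -/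
/-- Weight of a word relative to slope `b / n`. -/
def wt (n b : ℕ) (w : List Bool) : ℤ := (n : ℤ) * (w.count true : ℤ) - (b : ℤ) * (w.length : ℤ)

theorem wt_append (n b : ℕ) (x y : List Bool) : wt n b (x ++ y) = wt n b x + wt n b y := by
  simp only [wt, List.count_append, List.length_append]
  push_cast
  ring

theorem lex_cases {x y : List Bool} (h : List.Lex (· < ·) x y) :
    (∃ t, t ≠ [] ∧ y = x ++ t) ∨
      ∃ q s t, x = q ++ false :: s ∧ y = q ++ true :: t := by
  induction h with
  | nil => exact Or.inl ⟨_, List.cons_ne_nil _ _, rfl⟩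
  | @cons c l l' _ ih =>
    rcases ih with ⟨t, ht, rfl⟩ | ⟨q, s, t, rfl, rfl⟩
    · exact Or.inl ⟨t, ht, rfl⟩
    · exact Or.inr ⟨c :: q, s, t, rfl, rfl⟩
  | @rel c l d l' hcd =>
    refine Or.inr ⟨[], l, l', ?_⟩
    revert hcd
    cases c <;> cases d <;> simp

theorem lex_tri (x y : List Bool) :
    List.Lex (· < ·) x y ∨ x = y ∨ List.Lex (· < ·) y x := by
  induction x generalizing y with
  | nil =>
    cases y with
    | nil => simp
    | cons d l => exact Or.inl List.Lex.nil
  | cons c l ih =>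
    cases y with
    | nil => exact Or.inr (Or.inr List.Lex.nil)
    | cons d m =>
      rcases lt_trichotomy c d with h | h | h
      · exact Or.inl (List.Lex.rel h)
      · subst h
        rcases ih m with h | h | h
        · exact Or.inl (List.Lex.cons h)
        · exact Or.inr (Or.inl (by rw [h]))
        · exact Or.inr (Or.inr (List.Lex.cons h))
      · exact Or.inr (Or.inr (List.Lex.rel h))

/-- Prefixes of the (infinite) Christoffel word. -/
def cpre (n b r : ℕ) : List Bool :=
  (List.range r).map fun i => decide ((i + 1) * b / n ≠ i * b / n)

theorem cpre_succ (n b r : ℕ) :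
    cpre n b (r + 1) = cpre n b r ++ [decide ((r + 1) * b / n ≠ r * b / n)] := by
  simp [cpre, List.range_succ]

theorem cpre_length (n b r : ℕ) : (cpre n b r).length = r := by simp [cpre]

theorem cpre_count (n b : ℕ) (hbn : b ≤ n) (hn : 0 < n) (r : ℕ) :
    (cpre n b r).count true = r * b / n := by
  induction r with
  | zero => simp [cpre]
  | succ r ih =>
    rw [cpre_succ, List.count_append, ih]
    have h1 : r * b / n ≤ (r + 1) * b / n := Nat.div_le_div_right (by nlinarith)
    have h2 : (r + 1) * b / n ≤ r * b / n + 1 := by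
      rw [← Nat.add_div_right _ hn]
      exact Nat.div_le_div_right (by nlinarith)
    by_cases h : (r + 1) * b / n = r * b / n
    · simp [h]
    · simp [h]; omega

theorem cpre_prefix {n b N : ℕ} {q s : List Bool} (h : cpre n b N = q ++ s) :
    q = cpre n b q.length := by
  have hl : q.length ≤ N := by
    have := congrArg List.length h
    rw [cpre_length, List.length_append] at this
    omega
  have h2 : (cpre n b N).take q.length = q := by rw [h]; simp
  rw [← h2]
  simp [cpre, ← List.map_take, List.take_range, hl]

theorem wt_prefix {n b N : ℕ} (hbn : b ≤ n) (hn : 0 < n) {q s : List Bool}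
    (h : cpre n b N = q ++ s) : wt n b q ≤ 0 := by
  have h1 : q.count true = q.length * b / n := by
    conv_lhs => rw [cpre_prefix h]
    exact cpre_count n b hbn hn _
  have h2 : n * (q.length * b / n) ≤ q.length * b := Nat.mul_div_le _ _
  rw [← h1] at h2
  unfold wt
  zify at h2
  linarith

theorem wt_good {n b N : ℕ} (hbn : b ≤ n) (hn : 0 < n) {q s : List Bool}
    (h : cpre n b N = q ++ false :: s) : 0 < wt n b (q ++ [true]) := by
  have h1 : q.count true = q.length * b / n := by
    conv_lhs => rw [cpre_prefix h]
    exact cpre_count n b hbn hn _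
  have h' : cpre n b N = (q ++ [false]) ++ s := by simp [h]
  have h3 : (q ++ [false]).count true = (q.length + 1) * b / n := by
    conv_lhs => rw [cpre_prefix h']
    rw [cpre_count n b hbn hn]; simp
  have h4 : q.count true = (q.length + 1) * b / n := by
    rw [← h3]; simp
  have h5 := Nat.lt_mul_div_succ ((q.length + 1) * b) hn
  rw [← h4] at h5
  unfold wt
  simp only [List.count_append, List.length_append, List.count_singleton_self,
    List.length_singleton]
  zify at h5
  push_cast
  linarith

theorem lower_eq_s5 (a b : ℕ) : lowerChristoffel a b = cpre (a + b) b (a + b) := rfl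

theorem wt_lower (a b : ℕ) (ha : 0 < a) : wt (a + b) b (cpre (a + b) b (a + b)) = 0 := by
  unfold wt
  rw [cpre_count _ _ (by omega) (by omega), cpre_length, Nat.mul_div_cancel_left _ (by omega)]
  ring

theorem wpow_length (v : List Bool) (m : ℕ) : (wpow v m).length = m * v.length := by
  simp [wpow]

theorem wpow_count (v : List Bool) (m : ℕ) : (wpow v m).count true = m * v.count true := by
  simp [wpow, List.count_flatten]

theorem lower_lyndon (a b : ℕ) (ha : 0 < a) (hb : 0 < b) (hab : Nat.Coprime a b) :
    IsLyndonWord (lowerChristoffel a b) := by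
  have hn : 0 < a + b := by omega
  have hbn : b ≤ a + b := by omega
  have hcop : Nat.Coprime (a + b) b := by simpa using hab
  rw [lower_eq_s5]
  refine ⟨?_, ?_, ?_⟩
  · intro h
    have := congrArg List.length h
    rw [cpre_length] at this
    simp at this; omega
  · rintro ⟨v, m, hm, h⟩
    have h1 := congrArg List.length h
    have h2 := congrArg (List.count true) h
    rw [cpre_length, wpow_length] at h1
    rw [cpre_count _ _ hbn hn, wpow_count, Nat.mul_div_cancel_left _ hn] at h2
    have : m ∣ Nat.gcd (a + b) b := Nat.dvd_gcd ⟨_, h1⟩ ⟨_, h2⟩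
    rw [hcop] at this
    have := Nat.le_of_dvd one_pos this
    omega
  · intro x v h hx hv
    have hlen := congrArg List.length h
    rw [cpre_length, List.length_append] at hlen
    have hxp := List.length_pos_iff.mpr hx
    have hvp := List.length_pos_iff.mpr hv
    have h0 := wt_lower a b ha
    have hwx : wt (a + b) b x ≤ 0 := wt_prefix hbn hn h
    rcases lex_tri (cpre (a + b) b (a + b)) v with h1 | h1 | h1
    · exact h1
    · have := congrArg List.length h1
      rw [cpre_length] at this
      omega
    · exfalso
      rcases lex_cases h1 with ⟨t, ht, h2⟩ | ⟨q, s, t, h2, h3⟩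
      · have hwv : wt (a + b) b v ≤ 0 := wt_prefix hbn hn h2
        rw [h, wt_append] at h0
        have hx0 : wt (a + b) b x = 0 := by linarith
        unfold wt at hx0
        have h4 : (a + b) * x.count true = b * x.length := by
          zify; push_cast at hx0; linarith
        have h5 : (a + b) ∣ x.length := hcop.dvd_of_dvd_mul_left ⟨_, h4.symm⟩
        have := Nat.le_of_dvd hxp h5
        omega
      · have g1 : 0 < wt (a + b) b ((x ++ q) ++ [true]) :=
          wt_good hbn hn (N := a + b) (s := s) (by rw [h, h2]; simp)
        have g2 : wt (a + b) b (q ++ [true]) ≤ 0 :=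
          wt_prefix hbn hn (N := a + b) (s := t) (by rw [h3]; simp)
        rw [List.append_assoc, wt_append] at g1
        linarith

theorem suffix_pos {n b : ℕ} {c u q s t : List Bool} (hc : c = q ++ false :: s)
    (hu : u = q ++ true :: t)
    (good : ∀ q s, c = q ++ false :: s → 0 < wt n b (q ++ [true]))
    (hL : ∀ x v : List Bool, u = x ++ v → x ≠ [] → v ≠ [] → List.Lex (· < ·) u v) :
    ∀ k, ∀ x v : List Bool, v.length ≤ k → u = x ++ v → v ≠ [] → 0 < wt n b v := by
  intro k
  induction k with
  | zero =>
    intro x v hk _ hv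
    exact absurd (List.length_eq_zero_iff.mp (by omega)) hv
  | succ k ih =>
    intro x v hk hx hv
    have step : ∀ p t', v = (p ++ [true]) ++ t' → 0 < wt n b (p ++ [true]) →
        0 < wt n b v := by
      intro p t' hv' hp
      have hl := congrArg List.length hv'
      simp only [List.length_append, List.length_singleton] at hl
      rw [hv', wt_append]
      by_cases ht : t' = []
      · subst ht; simpa [wt] using hp
      · have := ih (x ++ (p ++ [true])) t' (by omega) (by rw [hx, hv']; simp) ht
        linarith
    by_cases hxe : x = []
    · subst hxe
      refine step q t ?_ (good q s hc)
      rw [← List.nil_append v, ← hx, hu]; simp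
    · rcases lex_cases (hL x v hx hxe hv) with ⟨t', ht', h2⟩ | ⟨q', s', t', h2, h3⟩
      · have h4 := congrArg List.length hx
        have h5 := congrArg List.length h2
        have := List.length_pos_iff.mpr hxe
        simp only [List.length_append] at h4 h5
        omega
      · rw [hu] at h2
        rcases List.append_eq_append_iff.mp h2 with ⟨y, h4, h5⟩ | ⟨y, h4, h5⟩
        · cases y with
          | nil => simp at h5
          | cons d y =>
            simp only [List.cons_append, List.cons.injEq] at h5
            refine step q (y ++ true :: t') ?_ (good q s hc)
            rw [h3, h4, ← h5.1]; simp
        · cases y with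
          | nil => simp at h5
          | cons d y =>
            simp only [List.cons_append, List.cons.injEq] at h5
            refine step q' t' (by rw [h3]; simp) (good q' (y ++ false :: s) ?_)
            rw [hc, h4, ← h5.1]; simp

/-- For coprime positive `a, b`, the lower Christoffel word `w_{a,b}` is the
lexicographically greatest Lyndon word among Lyndon words with Parikh vector `(a,b)`. -/
theorem stmt5 (a b : ℕ) (ha : 0 < a) (hb : 0 < b) (hab : Nat.Coprime a b) :
    IsLyndonWord (lowerChristoffel a b) ∧
    ∀ u : List Bool, IsLyndonWord u → u.count false = a → u.count true = b →
      u = lowerChristoffel a b ∨ List.Lex (· < ·) u (lowerChristoffel a b) := by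
  refine ⟨lower_lyndon a b ha hb hab, ?_⟩
  intro u hL h0 h1
  have hlen : u.length = a + b := by
    rw [← h0, ← h1]; exact (List.count_false_add_count_true u).symm
  rw [lower_eq_s5]
  rcases lex_tri u (cpre (a + b) b (a + b)) with h | h | h
  · exact Or.inr h
  · exact Or.inl h
  · exfalso
    rcases lex_cases h with ⟨t, ht, h2⟩ | ⟨q, s, t, h2, h3⟩
    · have h4 := congrArg List.length h2
      have := List.length_pos_iff.mpr ht
      rw [List.length_append, cpre_length] at h4
      omega
    · have := suffix_pos (n := a + b) (b := b) h2 h3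
        (fun q s hq => wt_good (by omega) (by omega) hq) hL.2.2 u.length [] u le_rfl rfl hL.1
      unfold wt at this
      rw [h1, hlen] at this
      linarith
end

section
/- Let w be a nonempty binary word with Parikh vector (a,b). Then every conjugate of w is balanced (i.e., w is circularly balanced) if and only if w is a conjugate of the lower Christoffel word w_{a,b}. -/
theorem aux_per (P : ℕ → ℤ) (n : ℕ) (b : ℤ) (hP : ∀ k, P (k + n) = P k + b) (q k : ℕ) :
    P (k + n * q) = P k + q * b := by
  induction q with
  | zero => simp
  | succ q ih =>
    rw [Nat.mul_succ, ← Nat.add_assoc, hP, ih]; push_cast; ring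

theorem aux_circ (P : ℕ → ℤ) (n : ℕ) (hn : 0 < n) (b : ℤ) (hP : ∀ k, P (k + n) = P k + b)
    (H : ∀ s i j k, i + k ≤ n → j + k ≤ n →
      |(P (s + i + k) - P (s + i)) - (P (s + j + k) - P (s + j))| ≤ 1)
    (i j k : ℕ) (hk : k ≤ n) :
    |(P (i + k) - P i) - (P (j + k) - P j)| ≤ 1 := by
  have key : ∀ i d : ℕ, d ≤ n → |(P (i + k) - P i) - (P (i + d + k) - P (i + d))| ≤ 1 := by
    intro i d hd
    by_cases h1 : d + k ≤ n
    · simpa using H i 0 d k (by omega) h1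
    by_cases h2 : d ≤ k
    · have := H (i + k) 0 d (n - k) (by omega) (by omega)
      rw [show i + k + 0 + (n - k) = i + n by omega,
        show i + k + d + (n - k) = i + d + n by omega, hP, hP,
        show i + k + d = i + d + k by omega, Nat.add_zero] at this
      rw [abs_le] at this ⊢
      constructor <;> linarith [this.1, this.2]
    · have := H (i + d) 0 (n - d) k (by omega) (by omega)
      rw [show i + d + (n - d) + k = i + k + n by omega,
        show i + d + (n - d) = i + n by omega, hP, hP, Nat.add_zero] at this
      rw [abs_le] at this ⊢
      constructor <;> linarith [this.1, this.2]
  have h1 : i ≤ n * i := Nat.le_mul_of_pos_left i hn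
  have h2 := key i ((j + n * i - i) % n) (Nat.mod_lt _ hn).le
  have h3 := Nat.mod_add_div (j + n * i - i) n
  set d := (j + n * i - i) % n
  set q := (j + n * i - i) / n
  have e1 : P (j + n * i) = P (i + d + n * q) := by congr 1; omega
  have e2 : P (j + k + n * i) = P (i + d + k + n * q) := by congr 1; omega
  rw [aux_per P n b hP, aux_per P n b hP] at e1 e2
  rw [abs_le] at h2 ⊢
  constructor <;> linarith [h2.1, h2.2]

theorem aux_main (P : ℕ → ℤ) (n : ℕ) (hn : 0 < n) (b : ℤ) (hP : ∀ k, P (k + n) = P k + b)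
    (H : ∀ i j k, k ≤ n → |(P (i + k) - P i) - (P (j + k) - P j)| ≤ 1) :
    ∃ s, ∀ k ≤ n, P (s + k) = P s + k * b / n := by
  obtain ⟨s, hs, hmax⟩ := Finset.exists_max_image (Finset.range n)
    (fun x => (n : ℤ) * P x - x * b) ⟨0, by simpa using hn⟩
  refine ⟨s, fun k hk => ?_⟩
  have hn' : (0 : ℤ) < n := by exact_mod_cast hn
  have up : (n : ℤ) * P (s + k) - ((s + k : ℕ) : ℤ) * b ≤ n * P s - s * b := by
    have h := hmax ((s + k) % n) (by simpa using Nat.mod_lt _ hn)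
    have h3 := Nat.mod_add_div (s + k) n
    have h4 := aux_per P n b hP ((s + k) / n) ((s + k) % n)
    have h5 : ((s + k : ℕ) : ℤ) = ((s + k) % n : ℕ) + n * ((s + k) / n : ℕ) := by
      exact_mod_cast h3.symm
    rw [h3] at h4
    rw [h4, h5]
    linarith
  have low : ∀ t : ℕ, P (s + (t + 1) * k) - P s ≤ (t + 1) * (P (s + k) - P s + 1) - 1 := by
    intro t
    induction t with
    | zero => simp
    | succ t ih =>
      have := (abs_le.1 (H (s + (t + 1) * k) s k hk)).2
      rw [show s + (t + 1) * k + k = s + (t + 1 + 1) * k by ring] at this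
      push_cast
      linarith
  have l := low (n - 1)
  rw [Nat.sub_add_cancel hn, aux_per P n b hP] at l
  have hc : ((n - 1 : ℕ) : ℤ) + 1 = n := by omega
  rw [hc] at l
  have : (k : ℤ) * b / n = P (s + k) - P s := by
    rw [Int.ediv_eq_iff_of_pos hn']
    push_cast at up
    constructor <;> linarith
  linarith

/-- the periodic extension of `w` -/
def perExt (w : List Bool) (i : ℕ) : Bool := w.getD (i % w.length) false

/-- prefix counts of the periodic extension -/
def prefCount (w : List Bool) (k : ℕ) : ℕ := Nat.count (fun i => perExt w i = true) k

theorem rotate_eq_map (w : List Bool) (s : ℕ) :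
    w.rotate s = (List.range' s w.length).map (perExt w) := by
  apply List.ext_getElem
  · simp
  · intro i h1 h2
    have hn : 0 < w.length := by simp at h1; omega
    have := Nat.mod_lt (i + s) hn
    simp [List.getElem_rotate, perExt, Nat.add_comm s i, List.getElem?_eq_getElem this]

theorem count_map (w : List Bool) (s k : ℕ) :
    prefCount w (s + k) = prefCount w s + ((List.range' s k).map (perExt w)).count true := by
  induction k with
  | zero => simp
  | succ k ih =>
    rw [List.range'_concat, List.map_append, List.count_append, ← Nat.add_assoc, ← Nat.add_assoc, ← ih,
      prefCount, Nat.count_succ]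
    simp [prefCount]
    cases perExt w (s + k) <;> simp

theorem prefCount_length (w : List Bool) : prefCount w w.length = w.count true := by
  have h := count_map w 0 w.length
  rw [← rotate_eq_map] at h
  simpa [prefCount] using h

theorem perExt_per (w : List Bool) (q k : ℕ) : perExt w (k + w.length * q) = perExt w k := by
  simp [perExt]

theorem prefCount_per (w : List Bool) (k : ℕ) :
    prefCount w (k + w.length) = prefCount w k + w.count true := by
  rw [Nat.add_comm, prefCount, Nat.count_add]
  have : ∀ k, perExt w (w.length + k) = perExt w k := by
    intro k; simp [perExt]
  simp only [this]
  have := prefCount_length w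
  unfold prefCount at *
  omega

theorem infix_iff (f : ℕ → Bool) (s n : ℕ) (u : List Bool) :
    u <:+: (List.range' s n).map f ↔ ∃ i k, i + k ≤ n ∧ u = (List.range' (s + i) k).map f := by
  constructor
  · rintro ⟨p, q, h⟩
    have hl := congrArg List.length h
    simp at hl
    refine ⟨p.length, u.length, by omega, ?_⟩
    have e : n = p.length + (u.length + q.length) := by omega
    rw [e, ← List.range'_append_1, ← List.range'_append_1, List.map_append, List.map_append,
      List.append_assoc] at h
    have h1 := List.append_inj h (by simp)
    exact (List.append_inj h1.2 (by simp)).1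
  · rintro ⟨i, k, h, rfl⟩
    obtain ⟨c, rfl⟩ := Nat.exists_eq_add_of_le h
    refine ⟨(List.range' s i).map f, (List.range' (s + i + k) c).map f, ?_⟩
    rw [← List.map_append, ← List.map_append, List.range'_append_1, Nat.add_assoc s i k,
      List.range'_append_1]

theorem balanced_rotate (w : List Bool) (s : ℕ) : BalancedWord (w.rotate s) ↔
    ∀ i j k, i + k ≤ w.length → j + k ≤ w.length →
      |((prefCount w (s + i + k) : ℤ) - prefCount w (s + i)) -
        (prefCount w (s + j + k) - prefCount w (s + j))| ≤ 1 := by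
  unfold BalancedWord
  rw [rotate_eq_map]
  simp only [infix_iff, count_map w _ _]
  constructor
  · intro H i j k hi hj
    have := H _ _ ⟨i, k, hi, rfl⟩ ⟨j, k, hj, rfl⟩ (by simp)
    push_cast
    simpa [count_map] using this
  · rintro H _ _ ⟨i, k, hi, rfl⟩ ⟨j, k', hj, rfl⟩ hk
    obtain rfl : k = k' := by simpa using hk
    have := H i j k hi hj
    push_cast at this
    simpa [count_map] using this

theorem christoffel_rotate (w : List Bool) (s : ℕ) :
    lowerChristoffel (w.count false) (w.count true) = w.rotate s ↔
    ∀ i < w.length, perExt w (s + i) =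
      decide ((i + 1) * w.count true / w.length ≠ i * w.count true / w.length) := by
  have e : w.count false + w.count true = w.length := by
    simpa using List.count_not_add_count w true
  rw [rotate_eq_map, lowerChristoffel, e, List.range'_eq_map_range, List.map_map,
    List.map_inj_left]
  simp only [List.mem_range, Function.comp]
  exact forall₂_congr fun i _ => eq_comm

theorem prefCount_succ (w : List Bool) (k : ℕ) :
    prefCount w (k + 1) = prefCount w k + if perExt w k = true then 1 else 0 := by
  rw [prefCount, Nat.count_succ]; rfl

theorem floor_step (b n i k : ℕ) (hn : 0 < n) :
    i * b / n + k * b / n ≤ (i + k) * b / n ∧ (i + k) * b / n ≤ i * b / n + k * b / n + 1 := by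
  rw [Nat.add_mul]
  constructor
  · exact Nat.div_add_div_le_add_div
  · rw [Nat.add_div hn]; split_ifs <;> omega

theorem stmt6 (w : List Bool) (hw : w ≠ []) :
    (∀ u v : List Bool, w = u ++ v → BalancedWord (v ++ u)) ↔
    (∃ u v : List Bool, w = u ++ v ∧
      lowerChristoffel (w.count false) (w.count true) = v ++ u) := by
  have hn : 0 < w.length := List.length_pos_iff.2 hw
  have hrot : ∀ s, ∃ u v, w = u ++ v ∧ v ++ u = w.rotate s := fun s =>
    ⟨w.take (s % w.length), w.drop (s % w.length), by simp,
      List.rotate_eq_drop_append_take_mod.symm⟩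
  have hL : (∀ u v : List Bool, w = u ++ v → BalancedWord (v ++ u)) ↔
      ∀ s, BalancedWord (w.rotate s) := by
    constructor
    · intro H s
      obtain ⟨u, v, h1, h2⟩ := hrot s
      rw [← h2]; exact H u v h1
    · rintro H u v rfl
      have := H u.length
      rwa [List.rotate_append_length_eq] at this
  have hR : (∃ u v : List Bool, w = u ++ v ∧
      lowerChristoffel (w.count false) (w.count true) = v ++ u) ↔
      ∃ s, lowerChristoffel (w.count false) (w.count true) = w.rotate s := by
    constructor
    · rintro ⟨u, v, h, h2⟩
      refine ⟨u.length, ?_⟩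
      rw [h2, h, List.rotate_append_length_eq]
    · rintro ⟨s, h⟩
      obtain ⟨u, v, h1, h2⟩ := hrot s
      exact ⟨u, v, h1, h.trans h2.symm⟩
  rw [hL, hR]
  simp only [balanced_rotate, christoffel_rotate]
  have hP : ∀ k, (prefCount w (k + w.length) : ℤ) = prefCount w k + w.count true := by
    intro k; exact_mod_cast prefCount_per w k
  constructor
  · intro H
    obtain ⟨s, hs⟩ := aux_main (fun k => (prefCount w k : ℤ)) w.length hn _ hP
      (aux_circ (fun k => (prefCount w k : ℤ)) w.length hn _ hP H)
    have hs' : ∀ k ≤ w.length, prefCount w (s + k) = prefCount w s + k * w.count true / w.length := by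
      intro k hk; exact_mod_cast hs k hk
    refine ⟨s, fun i hi => ?_⟩
    have h1 := hs' i hi.le
    have h2 := hs' (i + 1) hi
    rw [← Nat.add_assoc, prefCount_succ, h1] at h2
    rw [Bool.eq_iff_iff, decide_eq_true_iff]
    split_ifs at h2 with h
    · simp only [h, true_iff]; omega
    · simp only [h]; simp; omega
  · rintro ⟨s, hs⟩
    have hb : w.count true ≤ w.length := List.count_le_length
    have hs' : ∀ i, perExt w (s + i) =
        decide ((i + 1) * w.count true / w.length ≠ i * w.count true / w.length) := by
      intro i
      have h0 := Nat.mod_add_div i w.length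
      have h1 := hs (i % w.length) (Nat.mod_lt _ hn)
      have h2 := perExt_per w (i / w.length) (s + i % w.length)
      rw [Nat.add_assoc, h0] at h2
      rw [h2, h1]
      generalize i % w.length = r at *
      generalize i / w.length = q at *
      subst h0
      rw [show (r + w.length * q + 1) * w.count true =
          (r + 1) * w.count true + w.length * (q * w.count true) by ring,
        show (r + w.length * q) * w.count true =
          r * w.count true + w.length * (q * w.count true) by ring,
        Nat.add_mul_div_left _ _ hn, Nat.add_mul_div_left _ _ hn]
      simp
    have hf : ∀ k, prefCount w (s + k) = prefCount w s + k * w.count true / w.length := by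
      intro k
      induction k with
      | zero => simp
      | succ k ih =>
        rw [← Nat.add_assoc, prefCount_succ, ih, hs' k]
        have h1 : k * w.count true / w.length ≤ (k + 1) * w.count true / w.length :=
          Nat.div_le_div_right (Nat.mul_le_mul_right _ (by omega))
        have h2 : (k + 1) * w.count true / w.length ≤ k * w.count true / w.length + 1 := by
          rw [← Nat.add_div_right _ hn]
          apply Nat.div_le_div_right
          rw [Nat.succ_mul]; omega
        simp only [decide_eq_true_iff]
        split_ifs <;> omega
    intro t i j k _ _
    have hss : s ≤ w.length * s := Nat.le_mul_of_pos_left s hn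
    have hper : ∀ x, (prefCount w (x + w.length * s) : ℤ) = prefCount w x + s * w.count true :=
      aux_per (fun k => (prefCount w k : ℤ)) w.length _ hP s
    have gen : ∀ x, s ≤ x → ∃ m : ℕ, (m = k * w.count true / w.length) ∧
        prefCount w x + m ≤ prefCount w (x + k) ∧ prefCount w (x + k) ≤ prefCount w x + m + 1 := by
      intro x hx
      obtain ⟨y, rfl⟩ := Nat.exists_eq_add_of_le hx
      have := floor_step (w.count true) w.length y k hn
      refine ⟨_, rfl, ?_⟩
      rw [Nat.add_assoc, hf, hf]
      omega
    obtain ⟨m, hm, g1, g2⟩ := gen (t + i + w.length * s) (by omega)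
    obtain ⟨m', hm', g3, g4⟩ := gen (t + j + w.length * s) (by omega)
    have e1 := hper (t + i)
    have e2 := hper (t + i + k)
    have e3 := hper (t + j)
    have e4 := hper (t + j + k)
    rw [Nat.add_right_comm _ _ k] at g1 g2 g3 g4
    have : m = m' := by rw [hm, hm']
    zify at *
    rw [abs_le]
    constructor <;> linarith
end

section
/- Let a, b be positive integers and n = a + b. For every balanced binary word u with Parikh vector (a,b) and every k with 1 < k < n, the prefix of length k of u has the same Parikh vector as the prefix of length k of w_{a,b} or as the prefix of length k of W_{a,b}; equivalently, the number of 1s in the prefix of length k of u is either ⌊kb/n⌋ or ⌈kb/n⌉. -/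
/-- Euclid-style descent: an integer-valued balanced sequence has no too-high prefix. -/
lemma no_high (n : ℕ) (k : ℕ) : ∀ P : ℕ → ℤ, P 0 = 0 →
    (∀ i j l, i + l ≤ n → j + l ≤ n → (P (i + l) - P i) - (P (j + l) - P j) ≤ 1) →
    0 < k → k ≤ n → (n : ℤ) * P k < k * P n + n := by
  induction k using Nat.strong_induction_on with
  | _ k ih =>
  intro P hP0 hP hk hkn
  by_contra! hc
  have hdm := Nat.div_add_mod n k
  have hr : n % k < k := Nat.mod_lt _ hk
  have hq : 0 < n / k := Nat.div_pos hkn hk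
  generalize n / k = q at *
  generalize n % k = r at *
  have key : ∀ j : ℕ, j + 1 ≤ q → ((j : ℤ) + 1) * (P k - 1) + 1 ≤ P (k * (j + 1)) := by
    intro j
    induction j with
    | zero => intro _; simp
    | succ j ihj =>
      intro hj
      have h1 := ihj (by omega)
      have h3 : k * (j + 1) + k ≤ n := by
        have := Nat.mul_le_mul_left k hj
        have e : k * (j + 1 + 1) = k * (j + 1) + k := by ring
        omega
      have h2 := hP 0 (k * (j + 1)) k (by omega) h3
      have e : k * (j + 1 + 1) = k * (j + 1) + k := by ring
      rw [e]
      simp only [zero_add, hP0] at h2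
      push_cast
      linarith
  have h1 := key (q - 1) (by omega)
  have e1 : q - 1 + 1 = q := by omega
  rw [e1] at h1
  have e2 : ((q - 1 : ℕ) : ℤ) + 1 = q := by omega
  rw [e2] at h1
  have e3 : k * q = n - r := by omega
  have hz : (n : ℤ) = k * q + r := by exact_mod_cast hdm.symm
  have hn : (0 : ℤ) < n := by omega
  have hs : (r : ℤ) * (P 0 - P n) + n ≤ n * (P (n - r) - P n) := by
    rw [hP0, ← e3]
    have a1 := mul_le_mul_of_nonneg_left h1 hn.le
    have a2 : (q : ℤ) * (k * P n + n) ≤ q * (n * P k) :=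
      mul_le_mul_of_nonneg_left hc (by positivity)
    have a3 : (n : ℤ) * P n = (k * q + r) * P n := by rw [← hz]
    linarith
  rcases Nat.eq_zero_or_pos r with h0 | h0
  · subst h0
    simp at hs
    omega
  · have := ih r hr (fun i => P (n - i) - P n) (by simp) (by
      intro i j l hi hj
      have := hP (n - (j + l)) (n - (i + l)) l (by omega) (by omega)
      have x1 : n - (j + l) + l = n - j := by omega
      have x2 : n - (i + l) + l = n - i := by omega
      rw [x1, x2] at this
      linarith) h0 (by omega)
    simp only [Nat.sub_self] at this
    linarith

lemma count_steps (f : ℕ → ℕ) (h0 : f 0 = 0) (h1 : ∀ i, f i ≤ f (i + 1))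
    (h2 : ∀ i, f (i + 1) ≤ f i + 1) (k : ℕ) :
    ((List.range k).map fun i => decide (f (i + 1) ≠ f i)).count true = f k := by
  induction k with
  | zero => simp [h0]
  | succ k ih =>
    rw [List.range_succ, List.map_append, List.count_append, ih]
    have := h1 k
    have := h2 k
    by_cases h : f (k + 1) = f k
    · simp [h]
    · simp [h]; omega

lemma lower_count (a b k : ℕ) (hn : 0 < a + b) (hk : k < a + b) :
    ((lowerChristoffel a b).take k).count true = k * b / (a + b) := by
  unfold lowerChristoffel
  rw [← List.map_take, List.take_range, min_eq_left hk.le]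
  refine count_steps (fun i => i * b / (a + b)) (by simp) ?_ ?_ k
  · intro i
    exact Nat.div_le_div_right (by nlinarith)
  · intro i
    show (i + 1) * b / (a + b) ≤ i * b / (a + b) + 1
    rw [← Nat.add_div_right _ hn]
    exact Nat.div_le_div_right (by nlinarith)

lemma upper_count (a b k : ℕ) (hn : 0 < a + b) (hk : k < a + b) :
    ((upperChristoffel a b).take k).count true = (k * b + (a + b) - 1) / (a + b) := by
  unfold upperChristoffel
  rw [← List.map_take, List.take_range, min_eq_left hk.le]
  refine count_steps (fun i => (i * b + (a + b) - 1) / (a + b)) ?_ ?_ ?_ k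
  · simp; omega
  · intro i
    refine Nat.div_le_div_right ?_
    have : (i + 1) * b = i * b + b := by ring
    omega
  · intro i
    show ((i + 1) * b + (a + b) - 1) / (a + b) ≤ (i * b + (a + b) - 1) / (a + b) + 1
    rw [← Nat.add_div_right _ hn]
    refine Nat.div_le_div_right ?_
    have : (i + 1) * b = i * b + b := by ring
    omega

lemma count_ft (l : List Bool) : l.count false + l.count true = l.length := by
  simp

/-- For every balanced word `u` with Parikh vector `(a,b)` (`a, b > 0`) and
every `1 < k < a + b`, the prefix of length `k` of `u` has the same Parikh vector as the
prefix of length `k` of `w_{a,b}` or of `W_{a,b}`. -/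
theorem stmt7 (a b : ℕ) (ha : 0 < a) (hb : 0 < b) (u : List Bool)
    (hu : BalancedWord u) (h0 : u.count false = a) (h1 : u.count true = b)
    (k : ℕ) (hk1 : 1 < k) (hk2 : k < a + b) :
    ((u.take k).count false = ((lowerChristoffel a b).take k).count false ∧
      (u.take k).count true = ((lowerChristoffel a b).take k).count true) ∨
    ((u.take k).count false = ((upperChristoffel a b).take k).count false ∧
      (u.take k).count true = ((upperChristoffel a b).take k).count true) := by
  have hlen : u.length = a + b := by rw [← count_ft, h0, h1]
  have hn : 0 < a + b := by omega
  have hlow := lower_count a b k hn hk2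
  have hupp := upper_count a b k hn hk2
  have c1 := count_ft (u.take k)
  have c2 := count_ft ((lowerChristoffel a b).take k)
  have c3 := count_ft ((upperChristoffel a b).take k)
  have l1 : (u.take k).length = k := by simp; omega
  have l2 : ((lowerChristoffel a b).take k).length = k := by
    simp [lowerChristoffel]; omega
  have l3 : ((upperChristoffel a b).take k).length = k := by
    simp [upperChristoffel]; omega
  have hbal : ∀ i j l, i + l ≤ a + b → j + l ≤ a + b →
      |(((u.take (i + l)).count true : ℤ) - (u.take i).count true) -
        (((u.take (j + l)).count true : ℤ) - (u.take j).count true)| ≤ 1 := by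
    intro i j l hi hj
    have := hu ((u.drop i).take l) ((u.drop j).take l)
      ((List.take_prefix _ _).isInfix.trans (List.drop_suffix _ _).isInfix)
      ((List.take_prefix _ _).isInfix.trans (List.drop_suffix _ _).isInfix)
      (by simp; omega)
    rw [List.take_add, List.take_add, List.count_append, List.count_append]
    push_cast
    simpa using this
  have hfull : u.take (a + b) = u := List.take_of_length_le hlen.le
  have hA := no_high (a + b) k (fun i => ((u.take i).count true : ℤ)) (by simp)
    (fun i j l hi hj => (abs_le.1 (hbal i j l hi hj)).2) (by omega) hk2.le
  have hB := no_high (a + b) k (fun i => -((u.take i).count true : ℤ)) (by simp)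
    (fun i j l hi hj => by have := (abs_le.1 (hbal i j l hi hj)).1; linarith)
    (by omega) hk2.le
  simp only [hfull, h1] at hA hB
  generalize hp : (u.take k).count true = p at *
  have hA' : (a + b) * p < k * b + (a + b) := by exact_mod_cast hA
  have hB' : k * b < (a + b) * p + (a + b) := by
    zify
    push_cast at hB
    linarith
  by_cases h : (a + b) * p ≤ k * b
  · left
    have : k * b / (a + b) = p := by
      apply Nat.div_eq_of_lt_le <;> nlinarith
    omega
  · right
    have e : (p + 1) * (a + b) = (a + b) * p + (a + b) := by ring
    have e' : p * (a + b) = (a + b) * p := by ring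
    have : (k * b + (a + b) - 1) / (a + b) = p := by
      apply Nat.div_eq_of_lt_le
      · omega
      · omega
    omega
end

section
/- For positive integers α, β and n, let N_{α,β}(n) denote the number of distinct factors of w_{α,β}^ω having length n and minimal period α+β. Then: N_{α,β}(n) = 0 if gcd(α,β) > 1 or n < α+β; N_{α,β}(n) = 2(n−α−β+1) if gcd(α,β) = 1 and α+β ≤ n < α+β+min{α',β'}; N_{α,β}(n) = n − max{α',β'} + 1 if gcd(α,β) = 1 and α+β+min{α',β'} ≤ n < α+β+max{α',β'}; and N_{α,β}(n) = α+β if gcd(α,β) = 1 and n ≥ α+β+max{α',β'}. Here α' (respectively β') is the multiplicative inverse of α (respectively β) modulo α+β, taken in {1,…,α+β−1}. -/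
/-- `N_{α,β}(n)`: the number of distinct factors of `w_{α,β}^ω` of length `n` and minimal
period `α + β`. -/
noncomputable def NFactors (α β n : ℕ) : ℕ :=
  Set.ncard {u : List Bool |
    IsOmegaFactor u (lowerChristoffel α β) ∧ u.length = n ∧ IsMinPeriod u (α + β)}

def cL (α β x : ℕ) : Bool := decide (α ≤ x * β % (α + β))

def cU (α β n j : ℕ) : List Bool := (List.range n).map fun i => cL α β (j + i)

theorem cL_letter (α β i : ℕ) (hα : 0 < α) :
    decide ((i + 1) * β / (α + β) ≠ i * β / (α + β)) = cL α β i := by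
  unfold cL
  have hp : 0 < α + β := by omega
  have h := Nat.add_div (a := i * β) (b := β) hp
  have hb : β / (α + β) = 0 := Nat.div_eq_of_lt (by omega)
  have hb2 : β % (α + β) = β := Nat.mod_eq_of_lt (by omega)
  rw [hb, hb2] at h
  have : (i + 1) * β = i * β + β := by ring
  rw [this, h]
  congr 1
  split_ifs with h1
  · simp; omega
  · simp; omega

theorem cL_add_p (α β x k : ℕ) : cL α β (x + k * (α + β)) = cL α β x := by
  unfold cL
  have : (x + k * (α + β)) * β = x * β + (α + β) * (k * β) := by ring
  rw [this, Nat.add_mul_mod_self_left]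

theorem cL_mod (α β x : ℕ) : cL α β (x % (α + β)) = cL α β x := by
  conv_rhs => rw [← Nat.mod_add_div x (α + β), mul_comm (α + β), cL_add_p]

theorem wpow_chr (α β m : ℕ) (hα : 0 < α) :
    wpow (lowerChristoffel α β) m = (List.range (m * (α + β))).map (cL α β) := by
  have hw : lowerChristoffel α β = (List.range (α + β)).map (cL α β) := by
    unfold lowerChristoffel
    congr 1
    funext i
    exact cL_letter α β i hα
  induction m with
  | zero => simp [wpow]
  | succ m ih =>
    unfold wpow at *
    rw [List.replicate_succ', List.flatten_append, ih, Nat.succ_mul, List.range_add,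
      List.map_append, hw]
    simp only [List.flatten_cons, List.flatten_nil, List.append_nil, List.map_map]
    congr 1
    apply List.map_congr_left
    intro i _
    simp [add_comm (m * (α + β)) i, cL_add_p]

theorem cU_getD (α β n j i : ℕ) (hi : i < n) : (cU α β n j).getD i false = cL α β (j + i) := by
  simp [cU, List.getD, hi]

theorem cU_length (α β n j : ℕ) : (cU α β n j).length = n := by simp [cU]

theorem cU_mod (α β n j : ℕ) : cU α β n (j % (α + β)) = cU α β n j := by
  unfold cU
  apply List.map_congr_left
  intro i _
  rw [← cL_mod α β (j + i), ← cL_mod α β (j % (α + β) + i)]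
  simp

theorem factor_iff (α β n : ℕ) (hα : 0 < α) (u : List Bool) :
    (IsOmegaFactor u (lowerChristoffel α β) ∧ u.length = n) ↔
      ∃ j, 1 ≤ j ∧ j ≤ α + β ∧ u = cU α β n j := by
  constructor
  · rintro ⟨⟨m, s, t, h⟩, hl⟩
    rw [wpow_chr _ _ _ hα] at h
    have hu : u = cU α β n s.length := by
      apply List.ext_getElem
      · rw [cU_length, hl]
      · intro i h1 h2
        have hlen := congrArg List.length h
        simp at hlen
        have h3 : ((s ++ u ++ t))[s.length + i]'(by simp; omega) = u[i] := by
          rw [List.getElem_append_left (by simp; omega), List.getElem_append_right (by omega)]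
          simp
        rw [← h3]
        simp [h, cU]
    by_cases h0 : s.length % (α + β) = 0
    · refine ⟨α + β, by omega, le_rfl, ?_⟩
      rw [hu, ← cU_mod, h0, ← cU_mod α β n (α + β)]
      simp
    · refine ⟨s.length % (α + β), by omega, (Nat.mod_lt _ (by omega)).le, ?_⟩
      rw [cU_mod, hu]
  · rintro ⟨j, h1, h2, rfl⟩
    refine ⟨⟨j + n, ?_⟩, cU_length _ _ _ _⟩
    rw [wpow_chr _ _ _ hα]
    have hle : j + n ≤ (j + n) * (α + β) := Nat.le_mul_of_pos_right _ (by omega)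
    obtain ⟨d, hd⟩ := Nat.exists_eq_add_of_le hle
    rw [hd, List.range_add, List.map_append, List.range_add, List.map_append]
    refine ⟨(List.range j).map (cL α β), ((List.range d).map (fun x => j + n + x)).map (cL α β), ?_⟩
    congr 2
    simp [cU]

theorem hasPeriod_cU (α β n j q : ℕ) :
    HasPeriod (cU α β n j) q ↔ 0 < q ∧ ∀ i, i + q < n → cL α β (j + i) = cL α β (j + i + q) := by
  unfold HasPeriod
  rw [cU_length]
  refine and_congr_right fun _ => forall_congr' fun i => ?_
  refine imp_congr_right fun h => ?_
  rw [cU_getD _ _ _ _ _ (by omega), cU_getD _ _ _ _ _ h, add_assoc]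

theorem hasPeriod_p (α β n j : ℕ) (hα : 0 < α) : HasPeriod (cU α β n j) (α + β) := by
  rw [hasPeriod_cU]
  refine ⟨by omega, fun i _ => ?_⟩
  have := cL_add_p α β (j + i) 1
  rw [one_mul] at this
  exact this.symm

theorem min_iff (α β n j : ℕ) (hα : 0 < α) :
    IsMinPeriod (cU α β n j) (α + β) ↔ ∀ q, HasPeriod (cU α β n j) q → α + β ≤ q :=
  ⟨fun h => h.2, fun h => ⟨hasPeriod_p α β n j hα, h⟩⟩

theorem add_mod_cases (p a b : ℕ) (hp : 0 < p) :
    ((a + b) % p = a % p + b % p ∧ a % p + b % p < p) ∨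
    ((a + b) % p + p = a % p + b % p ∧ p ≤ a % p + b % p) := by
  have h := Nat.add_mod a b p
  have h1 := Nat.mod_lt a hp
  have h2 := Nat.mod_lt b hp
  by_cases hlt : a % p + b % p < p
  · left; rw [h, Nat.mod_eq_of_lt hlt]; omega
  · right
    rw [h, Nat.mod_eq_sub_mod (by omega), Nat.mod_eq_of_lt (by omega)]; omega

section cop
variable {α β : ℕ}

theorem mulb_zero (hc : Nat.Coprime α β) {x : ℕ} (h : x * β % (α + β) = 0) : (α + β) ∣ x := by
  have h1 : (α + β) ∣ x * β := Nat.dvd_of_mod_eq_zero h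
  have h2 : Nat.Coprime (α + β) β := by simpa using hc
  exact h2.dvd_of_dvd_mul_right h1

/-- last position -/
theorem last_mod (hα : 0 < α) (hβ : 0 < β) : (α + β - 1) * β % (α + β) = α := by
  have h := add_mod_cases (α + β) ((α + β - 1) * β) β (by omega)
  have h1 : (α + β - 1) * β + β = (α + β) * β := by
    obtain ⟨k, hk⟩ : ∃ k, α + β = k + 1 := ⟨α + β - 1, by omega⟩
    rw [hk]; simp; ring
  rw [h1, Nat.mul_mod_right, Nat.mod_eq_of_lt (show β < α + β by omega)] at h
  omega

/-- lower word is unbordered -/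
theorem lower_unb (hα : 0 < α) (hβ : 0 < β) (hc : Nat.Coprime α β) (q : ℕ) (h0 : 0 < q)
    (hq : q < α + β) (h1 : cL α β 0 = cL α β q)
    (h2 : cL α β (α + β - 1 - q) = cL α β (α + β - 1)) : False := by
  have hs : q * β % (α + β) ≠ 0 := fun h => by
    have := Nat.le_of_dvd h0 (mulb_zero hc h); omega
  have hl := last_mod hα hβ
  have h := add_mod_cases (α + β) ((α + β - 1 - q) * β) (q * β) (by omega)
  rw [← add_mul, show α + β - 1 - q + q = α + β - 1 by omega, hl] at h
  have h3 := Nat.mod_lt ((α + β - 1 - q) * β) (show 0 < α + β by omega)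
  have h4 := Nat.mod_lt (q * β) (show 0 < α + β by omega)
  unfold cL at h1 h2
  rw [decide_eq_decide] at h1 h2
  rw [zero_mul, Nat.zero_mod] at h1
  omega

/-- inverse of alpha -/
theorem a_mod {a' : ℕ} (hα : 0 < α) (hβ : 0 < β) (h : α * a' % (α + β) = 1) :
    a' * β % (α + β) = α + β - 1 := by
  have h1 := add_mod_cases (α + β) (a' * β) (α * a') (by omega)
  rw [show a' * β + α * a' = (α + β) * a' by ring, Nat.mul_mod_right, h] at h1
  omega

theorem ab_sum {a' b' : ℕ} (hα : 0 < α) (hβ : 0 < β) (hc : Nat.Coprime α β)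
    (ha : 1 ≤ a' ∧ a' ≤ α + β - 1 ∧ α * a' % (α + β) = 1)
    (hb : 1 ≤ b' ∧ b' ≤ α + β - 1 ∧ β * b' % (α + β) = 1) : a' + b' = α + β := by
  have h1 := a_mod hα hβ ha.2.2
  have h2 := add_mod_cases (α + β) (a' * β) (b' * β) (by omega)
  rw [← add_mul, h1, mul_comm b' β, hb.2.2] at h2
  have h3 : (a' + b') * β % (α + β) = 0 := by omega
  obtain ⟨k, hk⟩ := mulb_zero hc h3
  have : k = 1 := by
    rcases k with _ | _ | k
    · omega
    · rfl
    · rw [Nat.mul_add, Nat.mul_add] at hk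
      have := Nat.zero_le ((α + β) * k)
      omega
  rw [this] at hk; omega

/-- upper word is unbordered -/
theorem upper_unb {a' : ℕ} (hα : 0 < α) (hβ : 0 < β) (hc : Nat.Coprime α β)
    (ha : α * a' % (α + β) = 1) (q : ℕ) (h0 : 0 < q)
    (hq : q < α + β) (h1 : cL α β a' = cL α β (a' + q))
    (h2 : cL α β (a' + (α + β - 1 - q)) = cL α β (a' + (α + β - 1))) : False := by
  have hs : q * β % (α + β) ≠ 0 := fun h => by
    have := Nat.le_of_dvd h0 (mulb_zero hc h); omega
  have ham := a_mod hα hβ ha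
  have hl := last_mod hα hβ
  have e1 := add_mod_cases (α + β) (a' * β) (q * β) (by omega)
  have e2 := add_mod_cases (α + β) (a' * β) ((α + β - 1) * β) (by omega)
  have e3 := add_mod_cases (α + β) ((a' + (α + β - 1 - q)) * β) (q * β) (by omega)
  rw [← add_mul] at e1 e2 e3
  rw [show a' + (α + β - 1 - q) + q = a' + (α + β - 1) by omega] at e3
  have h3 := Nat.mod_lt ((a' + (α + β - 1 - q)) * β) (show 0 < α + β by omega)
  have h4 := Nat.mod_lt (q * β) (show 0 < α + β by omega)
  unfold cL at h1 h2
  rw [decide_eq_decide] at h1 h2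
  omega

theorem step_a {a' x : ℕ} (hα : 0 < α) (hβ : 0 < β) (hc : Nat.Coprime α β)
    (ha : α * a' % (α + β) = 1) (hx : ¬ (α + β) ∣ x) (hx1 : ¬ (α + β) ∣ x + 1) :
    cL α β x = cL α β (x + a') := by
  have ham := a_mod hα hβ ha
  have e1 := add_mod_cases (α + β) (x * β) (a' * β) (by omega)
  have e2 := add_mod_cases (α + β) (x * β) (1 * β) (by omega)
  rw [← add_mul] at e1 e2
  rw [one_mul, Nat.mod_eq_of_lt (show β < α + β by omega)] at e2
  have n1 : x * β % (α + β) ≠ 0 := fun h => hx (mulb_zero hc h)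
  have n2 : (x + 1) * β % (α + β) ≠ 0 := fun h => hx1 (mulb_zero hc h)
  unfold cL
  rw [decide_eq_decide]
  omega

theorem step_b {b' x : ℕ} (hα : 0 < α) (hβ : 0 < β) (hc : Nat.Coprime α β)
    (hb : β * b' % (α + β) = 1) (hx : ¬ (α + β) ∣ x + b') (hx1 : ¬ (α + β) ∣ x + b' + 1) :
    cL α β x = cL α β (x + b') := by
  have e1 := add_mod_cases (α + β) (x * β) (b' * β) (by omega)
  have e2 := add_mod_cases (α + β) ((x + b') * β) (1 * β) (by omega)
  rw [← add_mul] at e1 e2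
  rw [mul_comm b' β, hb] at e1
  rw [one_mul, Nat.mod_eq_of_lt (show β < α + β by omega)] at e2
  have n1 : (x + b') * β % (α + β) ≠ 0 := fun h => hx (mulb_zero hc h)
  have n2 : (x + b' + 1) * β % (α + β) ≠ 0 := fun h => hx1 (mulb_zero hc h)
  have h3 := Nat.mod_lt (x * β) (show 0 < α + β by omega)
  unfold cL
  rw [decide_eq_decide]
  omega

theorem not_dvd_between {p x : ℕ} (k : ℕ) (h1 : k * p < x) (h2 : x < (k + 1) * p) : ¬ p ∣ x := by
  rintro ⟨c, rfl⟩
  rw [mul_comm p c] at h1 h2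
  have := lt_of_mul_lt_mul_right h1 (Nat.zero_le p)
  have := lt_of_mul_lt_mul_right h2 (Nat.zero_le p)
  omega

theorem min_char {a' b' m j : ℕ} (hα : 0 < α) (hβ : 0 < β) (hc : Nat.Coprime α β)
    (ha : 1 ≤ a' ∧ a' ≤ α + β - 1 ∧ α * a' % (α + β) = 1)
    (hb : 1 ≤ b' ∧ b' ≤ α + β - 1 ∧ β * b' % (α + β) = 1) (hj : 1 ≤ j) (hjp : j ≤ α + β) :
    IsMinPeriod (cU α β (α + β + m) j) (α + β) ↔
      (j ≤ a' ∧ a' ≤ j + m) ∨ α + β ≤ j + m := by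
  have hab := ab_sum hα hβ hc ha hb
  rw [min_iff _ _ _ _ hα]
  constructor
  · intro h
    by_contra hcon
    rw [not_or, not_and_or] at hcon
    obtain ⟨hc1, hc2⟩ := hcon
    by_cases hja : a' < j
    · have := h b' ((hasPeriod_cU _ _ _ _ _).2 ⟨by omega, fun i hi => ?_⟩)
      · omega
      · exact step_b hα hβ hc hb.2.2 (not_dvd_between 1 (by omega) (by omega))
          (not_dvd_between 1 (by omega) (by omega))
    · have := h a' ((hasPeriod_cU _ _ _ _ _).2 ⟨by omega, fun i hi => ?_⟩)
      · omega
      · exact step_a hα hβ hc ha.2.2 (not_dvd_between 0 (by omega) (by omega))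
          (not_dvd_between 0 (by omega) (by omega))
  · intro h q hq
    rw [hasPeriod_cU] at hq
    obtain ⟨q0, hq⟩ := hq
    by_contra hlt
    have key : ∀ t, j ≤ t → t ≤ j + m → ∀ i, i + q < α + β →
        cL α β (t + i) = cL α β (t + i + q) := by
      intro t h1 h2 i hi
      have := hq (t - j + i) (by omega)
      rwa [show j + (t - j + i) = t + i by omega] at this
    rcases h with h | h
    · have k := key a' h.1 h.2
      refine upper_unb hα hβ hc ha.2.2 q q0 (by omega) (k 0 (by omega)) ?_
      have := k (α + β - 1 - q) (by omega)
      rwa [show a' + (α + β - 1 - q) + q = a' + (α + β - 1) by omega] at this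
    · have k := key (α + β) hjp h
      have e : ∀ x, cL α β (α + β + x) = cL α β x := fun x => by
        have := cL_add_p α β x 1
        rwa [one_mul, add_comm] at this
      refine lower_unb hα hβ hc q q0 (by omega) ?_ ?_
      · have := k 0 (by omega)
        rwa [add_assoc (α + β), e, e, zero_add] at this
      · have := k (α + β - 1 - q) (by omega)
        rwa [add_assoc (α + β), e, e, show (α + β - 1 - q) + q = (α + β - 1) by omega] at this

theorem cU_inj_lt (hα : 0 < α) (hβ : 0 < β) (hc : Nat.Coprime α β) {n j k : ℕ}
    (hn : α + β ≤ n) (hjk : j < k) (hkp : k < j + (α + β)) (h : cU α β n j = cU α β n k) :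
    False := by
  have h1 : ∀ i, i < α + β → cL α β (j + i) = cL α β (k + i) := fun i hi => by
    rw [← cU_getD α β n j i (by omega), ← cU_getD α β n k i (by omega), h]
  have hp : 0 < α + β := by omega
  -- all positions
  have h2 : ∀ x, cL α β x = cL α β (x + (k - j)) := fun x => by
    have hle : j ≤ x + j * (α + β) := by nlinarith
    have hm := Nat.mod_lt (x + j * (α + β) - j) hp
    have e := Nat.mod_add_div (x + j * (α + β) - j) (α + β)
    have := h1 _ hm
    rw [← cL_add_p α β (j + _) ((x + j * (α + β) - j) / (α + β)),
      ← cL_add_p α β (k + _) ((x + j * (α + β) - j) / (α + β))] at this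
    rw [mul_comm (α + β)] at e
    rw [add_assoc, add_assoc, e, show j + (x + j * (α + β) - j) = x + j * (α + β) by omega,
      show k + (x + j * (α + β) - j) = (x + (k - j)) + j * (α + β) by omega,
      cL_add_p, cL_add_p] at this
    exact this
  refine lower_unb hα hβ hc (k - j) (by omega) (by omega) ?_ ?_
  · simpa using h2 0
  · have := h2 (α + β - 1 - (k - j))
    rwa [show α + β - 1 - (k - j) + (k - j) = α + β - 1 by omega] at this

theorem count (hα : 0 < α) (hβ : 0 < β) (hc : Nat.Coprime α β) {a' b' m : ℕ}
    (ha : 1 ≤ a' ∧ a' ≤ α + β - 1 ∧ α * a' % (α + β) = 1)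
    (hb : 1 ≤ b' ∧ b' ≤ α + β - 1 ∧ β * b' % (α + β) = 1) :
    NFactors α β (α + β + m) =
      (a' + 1 - max 1 (a' - m)) + (α + β + 1 - max (a' + 1) (α + β - m)) := by
  have hset : {u : List Bool | IsOmegaFactor u (lowerChristoffel α β) ∧
      u.length = α + β + m ∧ IsMinPeriod u (α + β)} =
      cU α β (α + β + m) '' (↑(Finset.Icc (max 1 (a' - m)) a' ∪
        Finset.Icc (max (a' + 1) (α + β - m)) (α + β)) : Set ℕ) := by
    ext u
    simp only [Set.mem_ofPred_eq, ← and_assoc, factor_iff α β _ hα, Set.mem_image,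
      Finset.mem_coe, Finset.mem_union, Finset.mem_Icc]
    constructor
    · rintro ⟨⟨j, ⟨h1, h2⟩, rfl⟩, h⟩
      rw [min_char hα hβ hc ha hb h1 h2] at h
      exact ⟨j, by omega, rfl⟩
    · rintro ⟨j, h, rfl⟩
      refine ⟨⟨j, ⟨by omega, by omega⟩, rfl⟩, ?_⟩
      rw [min_char hα hβ hc ha hb (by omega) (by omega)]
      omega
  unfold NFactors
  rw [hset, Set.ncard_image_of_injOn, Set.ncard_coe_finset, Finset.card_union_of_disjoint,
    Nat.card_Icc, Nat.card_Icc]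
  · rw [Finset.disjoint_left]
    intro x h1 h2
    rw [Finset.mem_Icc] at h1 h2
    omega
  · intro x hx y hy h
    simp only [Finset.mem_coe, Finset.mem_union, Finset.mem_Icc] at hx hy
    rcases lt_trichotomy x y with hl | hl | hl
    · exact (cU_inj_lt hα hβ hc (by omega) hl (by omega) h).elim
    · exact hl
    · exact (cU_inj_lt hα hβ hc (by omega) hl (by omega) h.symm).elim

end cop

theorem zero_case (α β n : ℕ) (hα : 0 < α) (hβ : 0 < β) (hn : 0 < n)
    (h : 1 < Nat.gcd α β ∨ n < α + β) : NFactors α β n = 0 := by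
  unfold NFactors
  convert Set.ncard_empty (α := List Bool)
  rw [Set.eq_empty_iff_forall_notMem]
  rintro u ⟨h1, h2, h3⟩
  obtain ⟨j, -, -, rfl⟩ := (factor_iff α β n hα u).1 ⟨h1, h2⟩
  rcases h with h | h
  · obtain ⟨a, ha⟩ := Nat.gcd_dvd_left α β
    obtain ⟨b, hb⟩ := Nat.gcd_dvd_right α β
    set g := Nat.gcd α β
    have hab : α + β = g * (a + b) := by rw [mul_add, ← ha, ← hb]
    have hpos : 0 < a + b := by
      rcases Nat.eq_zero_or_pos (a + b) with h0 | h0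
      · rw [h0] at hab; omega
      · exact h0
    have := h3.2 (a + b) ((hasPeriod_cU _ _ _ _ _).2 ⟨hpos, fun i _ => ?_⟩)
    · nlinarith
    · unfold cL
      have e : (a + b) * β = (α + β) * b := by
        rw [hab]; conv_lhs => rw [hb]
        ring
      rw [add_mul (j + i), e, Nat.add_mul_mod_self_left]
  · have := h3.2 n ((hasPeriod_cU _ _ _ _ _).2 ⟨hn, fun i hi => by omega⟩)
    omega

/-- Closed formula for `N_{α,β}(n)`; here `a'` and `b'` are the
multiplicative inverses of `α` and `β` modulo `α + β`, taken in `{1, …, α+β−1}`. -/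
theorem stmt9 (α β n a' b' : ℕ) (hα : 0 < α) (hβ : 0 < β) (hn : 0 < n)
    (ha' : Nat.Coprime α β → 1 ≤ a' ∧ a' ≤ α + β - 1 ∧ α * a' % (α + β) = 1)
    (hb' : Nat.Coprime α β → 1 ≤ b' ∧ b' ≤ α + β - 1 ∧ β * b' % (α + β) = 1) :
    ((1 < Nat.gcd α β ∨ n < α + β) → NFactors α β n = 0) ∧
    (Nat.Coprime α β → α + β ≤ n → n < α + β + min a' b' →
      NFactors α β n = 2 * (n - α - β + 1)) ∧
    (Nat.Coprime α β → α + β + min a' b' ≤ n → n < α + β + max a' b' →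
      NFactors α β n = n - max a' b' + 1) ∧
    (Nat.Coprime α β → α + β + max a' b' ≤ n → NFactors α β n = α + β) := by
  refine ⟨zero_case α β n hα hβ hn, fun hc h1 h2 => ?_, fun hc h1 h2 => ?_, fun hc h1 => ?_⟩ <;>
  · have ha := ha' hc
    have hb := hb' hc
    have hab := ab_sum hα hβ hc ha hb
    obtain ⟨m, rfl⟩ := Nat.exists_eq_add_of_le (show α + β ≤ n by omega)
    rw [count hα hβ hc ha hb]
    omega
end

section
/- Let α, β be coprime positive integers and n ≥ 0. For every i ≥ 0, the number of indices j with i ≤ j < i + α + β such that the factor of length n of w_{α,β}^ω starting at position j (positions counted from 0) is heavy equals nβ mod (α+β). Equivalently, every factor u of w_{α,β}^ω of length α+β+n−1 contains exactly nβ mod (α+β) occurrences of heavy factors of length n. -/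
/-- The factor of length `n` of `w^ω` starting at position `j` (positions from 0). -/
def omegaFactorAt (w : List Bool) (j n : ℕ) : List Bool :=
  (List.range n).map fun t => w.getD ((j + t) % w.length) false

theorem aux_div_add (a b N : ℕ) (hN : 0 < N) :
    (a + b) / N = a / N + b / N ∨ (a + b) / N = a / N + b / N + 1 := by
  rw [Nat.add_div hN]
  split_ifs <;> simp

theorem aux_letter (α β : ℕ) (hα : 0 < α) (j : ℕ) :
    (lowerChristoffel α β).getD (j % (lowerChristoffel α β).length) false
      = decide ((j + 1) * β / (α + β) ≠ j * β / (α + β)) := by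
  have hN : 0 < α + β := by omega
  have hl : (lowerChristoffel α β).length = α + β := by simp [lowerChristoffel]
  rw [hl]
  have hj := Nat.mod_lt j hN
  have h1 : j * β = (j % (α + β)) * β + (α + β) * (j / (α + β) * β) := by
    conv_lhs => rw [← Nat.mod_add_div j (α + β)]
    ring
  have h2 : (j + 1) * β = (j % (α + β) + 1) * β + (α + β) * (j / (α + β) * β) := by
    rw [add_mul, h1]; ring
  rw [h1, h2, Nat.add_mul_div_left _ _ hN, Nat.add_mul_div_left _ _ hN]
  rw [List.getD_eq_getElem _ _ (by rw [hl]; exact hj)]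
  simp [lowerChristoffel]

theorem aux_count (α β : ℕ) (hα : 0 < α) (j n : ℕ) :
    (omegaFactorAt (lowerChristoffel α β) j n).count true + j * β / (α + β)
      = (j + n) * β / (α + β) := by
  have hN : 0 < α + β := by omega
  induction n with
  | zero => simp [omegaFactorAt]
  | succ n ih =>
    have hs : omegaFactorAt (lowerChristoffel α β) j (n + 1)
        = omegaFactorAt (lowerChristoffel α β) j n
          ++ [decide ((j + n + 1) * β / (α + β) ≠ (j + n) * β / (α + β))] := by
      rw [← aux_letter α β hα]
      simp [omegaFactorAt, List.range_succ]
    have hd : (j + n + 1) * β / (α + β) = (j + n) * β / (α + β) ∨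
        (j + n + 1) * β / (α + β) = (j + n) * β / (α + β) + 1 := by
      rw [add_mul (j + n), one_mul]
      have h0 : β / (α + β) = 0 := Nat.div_eq_of_lt (by omega)
      have := aux_div_add ((j + n) * β) β (α + β) hN
      rwa [h0] at this
    rw [hs, List.count_append, ← add_assoc j n 1]
    rcases hd with h | h <;> simp [h] <;> omega

theorem aux_sum (α β : ℕ) (hα : 0 < α) (i n : ℕ) :
    ∑ k ∈ Finset.range (α + β), (i + k + n) * β / (α + β)
      = ∑ k ∈ Finset.range (α + β), (i + k) * β / (α + β) + n * β := by
  have hN : 0 < α + β := by omega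
  induction n with
  | zero => simp
  | succ n ih =>
    have h1 := Finset.sum_range_succ (fun k => (i + k + n) * β / (α + β)) (α + β)
    have h2 := Finset.sum_range_succ' (fun k => (i + k + n) * β / (α + β)) (α + β)
    have h3 : (i + (α + β) + n) * β / (α + β) = (i + 0 + n) * β / (α + β) + β := by
      rw [← Nat.add_mul_div_left _ _ hN]
      congr 1; ring
    have h4 : ∀ k, i + k + (n + 1) = i + (k + 1) + n := by intro k; ring
    simp only [h4]
    rw [add_mul n, one_mul]
    omega

theorem aux_main_s10 (α β : ℕ) (hα : 0 < α) (i n : ℕ) :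
    ((Finset.range (α + β)).filter fun k =>
        (omegaFactorAt (lowerChristoffel α β) (i + k) n).count true
          = n * β / (α + β) + 1).card = n * β % (α + β) := by
  have hN : 0 < α + β := by omega
  rw [Finset.card_filter]
  have h := aux_sum α β hα i n
  have hk : ∀ k, (i + k + n) * β / (α + β) = (i + k) * β / (α + β) + (n * β / (α + β) +
      if (omegaFactorAt (lowerChristoffel α β) (i + k) n).count true
          = n * β / (α + β) + 1 then 1 else 0) := by
    intro k
    have hc := aux_count α β hα (i + k) n
    have hd := aux_div_add ((i + k) * β) (n * β) (α + β) hN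
    rw [← add_mul] at hd
    split_ifs <;> omega
  rw [Finset.sum_congr rfl (fun k _ => hk k), Finset.sum_add_distrib, Finset.sum_add_distrib] at h
  simp only [Finset.sum_const, Finset.card_range, smul_eq_mul] at h
  have := Nat.div_add_mod (n * β) (α + β)
  omega

theorem aux_wpow (w : List Bool) (m : ℕ) :
    ∀ k (hk : k < (wpow w m).length), (wpow w m)[k] = w.getD (k % w.length) false := by
  induction m with
  | zero => intro k hk; simp [wpow] at hk
  | succ m ih =>
    have hs : wpow w (m + 1) = w ++ wpow w m := by simp [wpow, List.replicate_succ]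
    intro k hk
    simp only [hs, List.getElem_append]
    split_ifs with h
    · rw [Nat.mod_eq_of_lt h, List.getD_eq_getElem _ _ h]
    · rw [ih, ← Nat.mod_eq_sub_mod (by omega)]

theorem aux_infix (w u : List Bool) (hu : IsOmegaFactor u w) :
    ∃ s, ∀ j n, j + n ≤ u.length → (u.drop j).take n = omegaFactorAt w (s + j) n := by
  obtain ⟨m, s, t, h⟩ := hu
  refine ⟨s.length, fun j n hjn => ?_⟩
  apply List.ext_getElem
  · simp [omegaFactorAt]; omega
  · intro k h1 h2
    have hk : k < n := by simpa [omegaFactorAt] using h2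
    have hl : s.length + (j + k) < (wpow w m).length := by
      rw [← h]; simp; omega
    have := aux_wpow w m (s.length + (j + k)) hl
    simp only [← h] at this
    rw [List.getElem_append_left (by simp; omega), List.getElem_append_right (by omega)] at this
    simp only [Nat.add_sub_cancel_left] at this
    simp [omegaFactorAt, this, add_assoc]

/-- For coprime positive `α, β` and any `n`, among any `α + β` consecutive
positions of `w_{α,β}^ω`, exactly `nβ mod (α+β)` of them start a heavy factor of length `n`;
equivalently, every factor of `w_{α,β}^ω` of length `α+β+n−1` contains exactly
`nβ mod (α+β)` occurrences of heavy factors of length `n`. -/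
theorem stmt10 (α β n i : ℕ) (hα : 0 < α) (hβ : 0 < β) (hab : Nat.Coprime α β) :
    ((Finset.Ico i (i + α + β)).filter fun j =>
        (omegaFactorAt (lowerChristoffel α β) j n).count true = n * β / (α + β) + 1).card
      = n * β % (α + β) ∧
    ∀ u : List Bool, IsOmegaFactor u (lowerChristoffel α β) →
      u.length = α + β + n - 1 →
      ((Finset.range (α + β)).filter fun j =>
          ((u.drop j).take n).count true = n * β / (α + β) + 1).card = n * β % (α + β) := by
  refine ⟨?_, ?_⟩
  · rw [← aux_main_s10 α β hα i n, add_assoc i α β]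
    symm
    apply Finset.card_bij (fun k _ => i + k)
    · intro k hk
      simp only [Finset.mem_filter, Finset.mem_range, Finset.mem_Ico] at hk ⊢
      exact ⟨by omega, hk.2⟩
    · intro a _ b _ hh
      omega
    · intro j hj
      simp only [Finset.mem_filter, Finset.mem_range, Finset.mem_Ico] at hj
      refine ⟨j - i, ?_, by omega⟩
      simp only [Finset.mem_filter, Finset.mem_range]
      rw [show i + (j - i) = j by omega]
      exact ⟨by omega, hj.2⟩
  · intro u hu hlen
    obtain ⟨s, hs⟩ := aux_infix _ u hu
    rw [← aux_main_s10 α β hα s n]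
    congr 1
    apply Finset.filter_congr
    intro j hj
    rw [Finset.mem_range] at hj
    rw [hs j n (by omega)]
end
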